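/- arXiv:0704.0028 — 5 statements merged into one kernel-verified Lean document; each statement's English description precedes it below -/
import Mathlib

section
/- Let A and B be real n×n matrices with A antisymmetric and B symmetric positive semi-definite, and let p_0, ..., p_{⌊n/2⌋} be the real coefficients defined by the polynomial identity (−1)^{⌊n/2⌋} · pf [[−λA, B], [−B, A]] = Σ_{t=0}^{⌊n/2⌋} p_t λ^t (as polynomials in the real variable λ, where [[−λA, B], [−B, A]] is the 2n×2n block matrix with blocks −λA, B, −B, A). Then p_t ≥ 0 for all t. -/
open Matrix BigOperators

/-- The pfaffian of a `2m × 2m` real matrix, via the symmetrized sum over all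
permutations. -/
noncomputable def pf {m : ℕ} (C : Matrix (Fin (2 * m)) (Fin (2 * m)) ℝ) : ℝ :=
  (1 / (m.factorial * 2 ^ m) : ℝ) *
    ∑ π : Equiv.Perm (Fin (2 * m)),
      ((Equiv.Perm.sign π : ℤ) : ℝ) *
        ∏ i : Fin m, C (π ⟨2 * i.val, by omega⟩) (π ⟨2 * i.val + 1, by omega⟩)

/-- The equivalence used to view a block `2n × 2n` matrix (indexed by `Fin n ⊕ Fin n`)
as a matrix indexed by `Fin (2 * n)`. -/
def blockIndex (n : ℕ) : (Fin n ⊕ Fin n) ≃ Fin (2 * n) :=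
  finSumFinEquiv.trans (finCongr (by omega))


def posEquiv (n : ℕ) : Fin n × Bool ≃ Fin (2 * n) where
  toFun x := ⟨2 * x.1.val + cond x.2 1 0, by rcases x with ⟨i, _ | _⟩ <;> simp <;> omega⟩
  invFun k := (⟨k.val / 2, by omega⟩, decide (k.val % 2 = 1))
  left_inv := by
    rintro ⟨i, _ | _⟩
    · ext <;> simp
    · ext
      · simp; omega
      · simp
  right_inv := by
    intro k
    ext
    rcases Nat.mod_two_eq_zero_or_one k.val with h | h <;> simp [h] <;> omega

def blkEquiv (n : ℕ) : Fin n × Bool ≃ Fin (2 * n) where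
  toFun x := blockIndex n (cond x.2 (Sum.inr x.1) (Sum.inl x.1))
  invFun k := Sum.elim (fun i => (i, false)) (fun i => (i, true)) ((blockIndex n).symm k)
  left_inv := by
    rintro ⟨i, _ | _⟩ <;> simp
  right_inv := by
    intro k
    obtain ⟨s, rfl⟩ := (blockIndex n).surjective k
    rcases s with i | i <;> simp

lemma blkEquiv_val (n : ℕ) (x : Fin n × Bool) :
    (blkEquiv n x).val = x.1.val + cond x.2 n 0 := by
  rcases x with ⟨i, _ | _⟩ <;> simp [blkEquiv, blockIndex, add_comm]

lemma posEquiv_val (n : ℕ) (x : Fin n × Bool) :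
    (posEquiv n x).val = 2 * x.1.val + cond x.2 1 0 := rfl

lemma pf_eq {m : ℕ} (C : Matrix (Fin (2 * m)) (Fin (2 * m)) ℝ) :
    pf C = (1 / (m.factorial * 2 ^ m) : ℝ) *
    ∑ π : Equiv.Perm (Fin (2 * m)),
      ((Equiv.Perm.sign π : ℤ) : ℝ) *
        ∏ i : Fin m, C (π (posEquiv m (i, false))) (π (posEquiv m (i, true))) := rfl

lemma prod_pos {m : ℕ} (f : Fin (2 * m) → ℝ) :
    ∏ k, f k = ∏ i : Fin m, (f (posEquiv m (i, false)) * f (posEquiv m (i, true))) := by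
  rw [← (posEquiv m).prod_comp, Fintype.prod_prod_type]
  simp [mul_comm]

/-- pairs of functions -/
def pairEquiv (m : ℕ) (F : Type) : (Fin (2 * m) → F) ≃ (Fin m → F × F) where
  toFun f i := (f (posEquiv m (i, false)), f (posEquiv m (i, true)))
  invFun g k := cond ((posEquiv m).symm k).2 (g ((posEquiv m).symm k).1).2
    (g ((posEquiv m).symm k).1).1
  left_inv := by
    intro f
    ext k
    obtain ⟨⟨i, _ | _⟩, rfl⟩ := (posEquiv m).surjective k <;> simp
  right_inv := by
    intro g
    ext i <;> simp

lemma pf_congr {m : ℕ} (M C : Matrix (Fin (2 * m)) (Fin (2 * m)) ℝ) :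
    pf (M * C * Mᵀ) = M.det * pf C := by
  rw [pf_eq, pf_eq, mul_left_comm]
  congr 1
  have h1 : ∀ π : Equiv.Perm (Fin (2 * m)),
      ∏ i : Fin m, (M * C * Mᵀ) (π (posEquiv m (i, false))) (π (posEquiv m (i, true)))
      = ∑ f : Fin (2 * m) → Fin (2 * m),
        (∏ i : Fin m, C (f (posEquiv m (i, false))) (f (posEquiv m (i, true)))) *
          ∏ k, M (π k) (f k) := by
    intro π
    have h2 : ∀ x y, (M * C * Mᵀ) x y = ∑ ab : Fin (2 * m) × Fin (2 * m),
        C ab.1 ab.2 * (M x ab.1 * M y ab.2) := by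
      intro x y
      rw [Fintype.sum_prod_type_right]
      simp only [Matrix.mul_apply, Matrix.transpose_apply, Finset.sum_mul]
      refine Finset.sum_congr rfl fun b _ => Finset.sum_congr rfl fun a _ => by ring
    simp only [h2]
    rw [Finset.prod_univ_sum, Fintype.piFinset_univ, ← (pairEquiv m _).sum_comp]
    refine Finset.sum_congr rfl fun f _ => ?_
    rw [prod_pos, ← Finset.prod_mul_distrib]
    rfl
  simp only [h1, Finset.mul_sum]
  rw [Finset.sum_comm]
  have h3 : ∀ f : Fin (2 * m) → Fin (2 * m), ∑ π : Equiv.Perm (Fin (2 * m)),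
      ((Equiv.Perm.sign π : ℤ) : ℝ) *
      ((∏ i : Fin m, C (f (posEquiv m (i, false))) (f (posEquiv m (i, true)))) *
          ∏ k, M (π k) (f k)) =
      (∏ i : Fin m, C (f (posEquiv m (i, false))) (f (posEquiv m (i, true)))) *
        (M.submatrix id f).det := by
    intro f
    rw [Matrix.det_apply', Finset.mul_sum]
    refine Finset.sum_congr rfl fun π _ => ?_
    simp only [Matrix.submatrix_apply, id]
    ring
  simp only [h3]
  symm
  refine Finset.sum_bij_ne_zero (fun π _ _ => (π : Fin (2 * m) → Fin (2 * m)))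
    (fun _ _ _ => Finset.mem_univ _) ?_ ?_ ?_
  · intro a _ _ b _ _ h
    exact Equiv.coe_fn_injective h
  · intro f _ hf
    have hinj : Function.Injective f := by
      intro i j hij
      by_contra hne
      apply hf
      rw [Matrix.det_zero_of_column_eq hne (by intro k; simp [hij]), mul_zero]
    have hbij := Finite.injective_iff_bijective.1 hinj
    refine ⟨Equiv.ofBijective f hbij, Finset.mem_univ _, ?_, rfl⟩
    intro h0
    apply hf
    have := Matrix.det_permute' (Equiv.ofBijective f hbij) M
    rw [Equiv.coe_ofBijective] at this
    rw [this]
    rw [Equiv.coe_ofBijective] at h0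
    linear_combination h0
  · intro π _ _
    rw [Matrix.det_permute' π M]
    ring

/-- symplectic form in product coordinates -/
def KK {n : ℕ} (x y : Fin n × Bool) : ℝ :=
  if x.1 = y.1 then (cond x.2 (cond y.2 0 (-1)) (cond y.2 1 0)) else 0

lemma KK_sign {n : ℕ} (σ : Equiv.Perm (Fin n × Bool))
    (h : ∀ i, KK (σ (i, false)) (σ (i, true)) ≠ 0) :
    ((Equiv.Perm.sign σ : ℤ) : ℝ) * ∏ i, KK (σ (i, false)) (σ (i, true)) = 1 := by
  have h1 : ∀ i, (σ (i, true)).1 = (σ (i, false)).1 := by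
    intro i
    by_contra hne
    exact h i (by rw [KK, if_neg (Ne.symm hne)])
  have h2 : ∀ i, (σ (i, true)).2 = !(σ (i, false)).2 := by
    intro i
    have := h i
    rw [KK, if_pos (h1 i).symm] at this
    revert this
    cases (σ (i, true)).2 <;> cases (σ (i, false)).2 <;> simp
  have hinj : Function.Injective (fun i => (σ (i, false)).1) := by
    intro i j hij
    simp only at hij
    by_cases hb : (σ (i, false)).2 = (σ (j, false)).2
    · have := σ.injective (Prod.ext hij hb)
      exact congrArg Prod.fst this
    · have h3 : (σ (i, false)).2 = (σ (j, true)).2 := by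
        rw [h2]
        revert hb
        cases (σ (i, false)).2 <;> cases (σ (j, false)).2 <;> simp
      have := σ.injective (Prod.ext (hij.trans (h1 j).symm) h3)
      exact congrArg Prod.fst this
  let τ : Equiv.Perm (Fin n) := Equiv.ofBijective _ (Finite.injective_iff_bijective.1 hinj)
  let ε : Fin n → Equiv.Perm Bool := fun i =>
    cond (σ (i, false)).2 (Equiv.swap false true) 1
  have hσ : σ = (Equiv.prodCongrLeft (fun _ : Bool => τ)) * (Equiv.prodCongrRight ε) := by
    apply Equiv.ext
    rintro ⟨i, b⟩
    simp only [Equiv.Perm.mul_apply, Equiv.prodCongrRight_apply, Equiv.prodCongrLeft_apply]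
    cases b
    · refine Prod.ext rfl ?_
      simp only [ε]
      cases (σ (i, false)).2 <;> simp
    · refine Prod.ext (h1 i) ?_
      simp only [ε, h2]
      cases (σ (i, false)).2 <;> simp
  have hs : Equiv.Perm.sign σ = ∏ i, Equiv.Perm.sign (ε i) := by
    conv_lhs => rw [hσ]
    rw [Equiv.Perm.sign_mul, Equiv.Perm.sign_prodCongrLeft, Equiv.Perm.sign_prodCongrRight]
    simp
  rw [hs]
  push_cast
  rw [← Finset.prod_mul_distrib]
  apply Finset.prod_eq_one
  intro i _
  rw [KK, if_pos (h1 i).symm, h2]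
  simp only [ε]
  cases (σ (i, false)).2 <;> simp

lemma sign_shuffle (n : ℕ) :
    Equiv.Perm.sign ((posEquiv n).symm.trans (blkEquiv n)) = (-1) ^ (n / 2) := by
  rw [Equiv.Perm.sign_eq_prod_prod_Iio]
  have h1 : ∀ j : Fin (2 * n), ∏ i ∈ Finset.Iio j,
      (if ((posEquiv n).symm.trans (blkEquiv n)) i < ((posEquiv n).symm.trans (blkEquiv n)) j
        then (1 : ℤˣ) else -1) = ∏ i, if i < j ∧
        ¬ ((posEquiv n).symm.trans (blkEquiv n)) i < ((posEquiv n).symm.trans (blkEquiv n)) j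
        then -1 else 1 := by
    intro j
    rw [← Finset.filter_gt_eq_Iio, Finset.prod_filter]
    refine Finset.prod_congr rfl fun i _ => ?_
    by_cases h : i < j
    · by_cases hh : ((posEquiv n).symm.trans (blkEquiv n)) i <
          ((posEquiv n).symm.trans (blkEquiv n)) j
      · rw [if_pos h, if_pos hh, if_neg (fun hx => hx.2 hh)]
      · rw [if_pos h, if_neg hh, if_pos ⟨h, hh⟩]
    · rw [if_neg h, if_neg (fun hx => h hx.1)]
  simp only [h1]
  rw [← (posEquiv n).prod_comp]
  simp only [← (posEquiv n).prod_comp (fun i => ite _ _ _)]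
  simp only [Fintype.prod_prod_type, Equiv.trans_apply, Equiv.symm_apply_apply, Fin.lt_def,
    blkEquiv_val, posEquiv_val, Fintype.prod_bool, cond_true, cond_false]
  have h2 : ∀ j : Fin n, (∏ i : Fin n,
      (if (2 * i.val + 1 < 2 * j.val + 0 ∧ ¬ (i.val + n < j.val + 0)) then (-1 : ℤˣ) else 1))
      = (-1) ^ j.val := by
    intro j
    have : ∀ i : Fin n, (if (2 * i.val + 1 < 2 * j.val + 0 ∧ ¬ (i.val + n < j.val + 0)) then (-1 : ℤˣ) else 1) = if i < j then -1 else 1 := by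
      intro i
      have := j.2
      refine if_congr ?_ rfl rfl
      rw [Fin.lt_def]
      omega
    simp only [this]
    rw [← Finset.prod_filter]
    simp [Finset.filter_gt_eq_Iio]
  have h3 : ∀ j : Fin n, (∏ i : Fin n,
      (if (2 * i.val + 0 < 2 * j.val + 0 ∧ ¬ (i.val + 0 < j.val + 0)) then (-1 : ℤˣ) else 1))
      = 1 := fun j => Finset.prod_eq_one fun i _ => if_neg (by omega)
  have h4 : ∀ j : Fin n, (∏ i : Fin n,
      (if (2 * i.val + 1 < 2 * j.val + 1 ∧ ¬ (i.val + n < j.val + n)) then (-1 : ℤˣ) else 1))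
      = 1 := fun j => Finset.prod_eq_one fun i _ => if_neg (by omega)
  have h5 : ∀ j : Fin n, (∏ i : Fin n,
      (if (2 * i.val + 0 < 2 * j.val + 1 ∧ ¬ (i.val + 0 < j.val + n)) then (-1 : ℤˣ) else 1))
      = 1 := fun j => Finset.prod_eq_one fun i _ => if_neg (by omega)
  simp only [Finset.prod_mul_distrib, h2, h3, h4, h5, one_mul, mul_one]
  rw [Finset.prod_pow_eq_pow_sum, Fin.sum_univ_eq_sum_range (fun i => i), Finset.sum_range_id]
  have key : ∀ k, (-1 : ℤˣ) ^ (∑ i ∈ Finset.range k, i) = (-1) ^ (k / 2) := by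
    intro k
    induction k using Nat.twoStepInduction with
    | zero => simp
    | one => simp
    | more k ih _ =>
      rw [Finset.sum_range_succ, Finset.sum_range_succ, add_assoc, pow_add, ih,
        show (k + 2) / 2 = k / 2 + 1 by omega, pow_succ, show k + (k + 1) = 2 * k + 1 by ring,
        pow_succ, pow_mul]
      simp
  rw [← Finset.sum_range_id, key]

/-- the standard symplectic block matrix -/
noncomputable def JJ (n : ℕ) : Matrix (Fin (2 * n)) (Fin (2 * n)) ℝ :=
  (Matrix.fromBlocks (0 : Matrix (Fin n) (Fin n) ℝ) 1 (-1) 0).submatrix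
            (blockIndex n).symm (blockIndex n).symm

lemma JJ_blk (n : ℕ) (x y : Fin n × Bool) : JJ n (blkEquiv n x) (blkEquiv n y) = KK x y := by
  rcases x with ⟨i, _ | _⟩ <;> rcases y with ⟨j, _ | _⟩ <;>
    simp [JJ, KK, blkEquiv, Matrix.one_apply, apply_ite]

lemma pf_JJ_nonneg (n : ℕ) : 0 ≤ (-1 : ℝ) ^ (n / 2) * pf (JJ n) := by
  rw [pf_eq, mul_left_comm, Finset.mul_sum]
  refine mul_nonneg (by positivity) (Finset.sum_nonneg fun π _ => ?_)
  by_cases h : ∃ i : Fin n, JJ n (π (posEquiv n (i, false))) (π (posEquiv n (i, true))) = 0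
  · obtain ⟨i, hi⟩ := h
    rw [Finset.prod_eq_zero (Finset.mem_univ i) hi]
    simp
  push Not at h
  let σ : Equiv.Perm (Fin n × Bool) := (posEquiv n).trans (π.trans (blkEquiv n).symm)
  have hK : ∀ i b c, JJ n (π (posEquiv n (i, b))) (π (posEquiv n (i, c)))
      = KK (σ (i, b)) (σ (i, c)) := by
    intro i b c
    rw [← JJ_blk]
    simp [σ]
  have hσ := KK_sign σ (fun i => by rw [← hK]; exact h i)
  have hπ : π = (posEquiv n).symm.trans (σ.trans (blkEquiv n)) := by
    ext k
    simp [σ]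
  have hs : Equiv.Perm.sign π = Equiv.Perm.sign σ * (-1) ^ (n / 2) := by
    rw [← sign_shuffle, ← Equiv.Perm.sign_trans_trans, ← hπ]
  simp only [hK]
  rw [hs]
  push_cast
  have : ((-1 : ℝ) ^ (n / 2)) * (-1) ^ (n / 2) = 1 := by
    rw [← mul_pow]; simp
  have h9 : (-1 : ℝ) ^ (n / 2) * (((Equiv.Perm.sign σ : ℤ) : ℝ) * (-1) ^ (n / 2) *
      ∏ i, KK (σ (i, false)) (σ (i, true))) = 1 := by
    linear_combination (((Equiv.Perm.sign σ : ℤ) : ℝ) * ∏ i, KK (σ (i, false)) (σ (i, true))) * this + hσ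
  rw [h9]
  exact zero_le_one

lemma det_antisymm_nonneg {ι : Type*} [Fintype ι] [DecidableEq ι] (A : Matrix ι ι ℝ)
    (hA : Aᵀ = -A) : 0 ≤ A.det := by
  by_contra! hneg
  have hcont : Continuous (fun s : ℝ => ((1 - s) • (1 : Matrix ι ι ℝ) + s • A).det) := by
    fun_prop
  have hivt := intermediate_value_Icc' (zero_le_one (α := ℝ)) hcont.continuousOn
  obtain ⟨s, ⟨hs0, hs1⟩, hs⟩ := hivt (show (0 : ℝ) ∈ _ by constructor <;> simp [hneg.le])
  have hs1' : s < 1 := by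
    rcases hs1.lt_or_eq with h | h
    · exact h
    · subst h; simp at hs; exact absurd hs hneg.ne
  obtain ⟨v, hv, hv0⟩ := Matrix.exists_mulVec_eq_zero_iff.2 hs
  have hz : v ⬝ᵥ A *ᵥ v = 0 := by
    have h1 : v ⬝ᵥ A *ᵥ v = v ⬝ᵥ Aᵀ *ᵥ v := by
      rw [Matrix.mulVec_transpose, dotProduct_comm v (v ᵥ* A), Matrix.dotProduct_mulVec]
    rw [hA, Matrix.neg_mulVec, dotProduct_neg] at h1
    linarith
  have h2 := congrArg (fun w => v ⬝ᵥ w) hv0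
  simp only [Matrix.add_mulVec, Matrix.smul_mulVec, Matrix.one_mulVec, dotProduct_add,
    dotProduct_smul, hz, dotProduct_zero, smul_eq_mul, mul_zero, add_zero] at h2
  rcases mul_eq_zero.1 h2 with h | h
  · linarith
  · exact hv (dotProduct_self_eq_zero.1 h)

/-- rows from `A` on `S`, rows from `diagonal d` off `S` -/
def pw {n : ℕ} (A : Matrix (Fin n) (Fin n) ℝ) (d : Fin n → ℝ) (S : Finset (Fin n)) :
    Matrix (Fin n) (Fin n) ℝ :=
  Matrix.of fun i j => if i ∈ S then A i j else Matrix.diagonal d i j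

lemma det_piecewise_nonneg {n : ℕ} (A : Matrix (Fin n) (Fin n) ℝ) (hA : Aᵀ = -A)
    (d : Fin n → ℝ) (hd : ∀ i, 0 ≤ d i) (S : Finset (Fin n)) :
    0 ≤ (pw A d S).det := by
  rw [Matrix.twoBlockTriangular_det _ (fun i => i ∈ S)]
  · refine mul_nonneg ?_ ?_
    · refine (det_antisymm_nonneg ((pw A d S).toSquareBlockProp fun i => i ∈ S) ?_).trans_eq
        (by congr!)
      ext i j
      have := congrFun (congrFun hA i.1) j.1
      simpa [Matrix.toSquareBlockProp, pw] using this
    · have : (Matrix.toSquareBlockProp (pw A d S)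
          fun i => ¬ i ∈ S) = Matrix.diagonal (fun i => d i.1) := by
        ext i j
        have hi := i.2
        simp only [Matrix.toSquareBlockProp_def, pw, Matrix.of_apply, hi, if_false]
        simp [Matrix.diagonal_apply, Subtype.ext_iff]
      rw [this, Matrix.det_diagonal]
      exact Finset.prod_nonneg fun i _ => hd i.1
  · intro i hi j hj
    simp only [pw, Matrix.of_apply, hi, if_false]
    rw [Matrix.diagonal_apply_ne]
    rintro rfl
    exact hi hj

lemma det_expand {n : ℕ} (A : Matrix (Fin n) (Fin n) ℝ) (d : Fin n → ℝ) (u : ℝ) :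
    (Matrix.diagonal d + u • A).det = ∑ S : Finset (Fin n),
      (pw A d S).det * u ^ S.card := by
  have h := (Matrix.detRowAlternating (n := Fin n) (R := ℝ)).toMultilinearMap.map_add_univ
    (u • A) (Matrix.diagonal d)
  rw [add_comm]
  refine h.trans (Finset.sum_congr rfl fun S _ => ?_)
  have h2 := (Matrix.detRowAlternating (n := Fin n) (R := ℝ)).toMultilinearMap.map_piecewise_smul
    (fun _ => u) (pw A d S) S
  rw [Finset.prod_const, smul_eq_mul, mul_comm] at h2
  refine Eq.trans ?_ h2
  congr 1
  ext i j
  by_cases hi : i ∈ S <;> simp [Finset.piecewise, pw, hi]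

lemma det_coeffs {n : ℕ} (A B : Matrix (Fin n) (Fin n) ℝ)
    (hA : Aᵀ = -A) (hBsymm : Bᵀ = B)
    (hBpsd : ∀ x : Fin n → ℝ, 0 ≤ x ⬝ᵥ B *ᵥ x) :
    ∃ a : Finset (Fin n) → ℝ, (∀ S, 0 ≤ a S) ∧
      ∀ u : ℝ, (B + u • A).det = ∑ S, a S * u ^ S.card := by
  have hH : B.IsHermitian := by
    rw [Matrix.IsHermitian, Matrix.conjTranspose_eq_transpose_of_trivial, hBsymm]
  have hP : B.PosSemidef := Matrix.PosSemidef.of_dotProduct_mulVec_nonneg hH (by simpa using hBpsd)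
  let U : Matrix (Fin n) (Fin n) ℝ := hH.eigenvectorUnitary
  have hsp : B = U * Matrix.diagonal hH.eigenvalues * Uᵀ := by
    have := hH.spectral_theorem
    rw [Unitary.conjStarAlgAut_apply] at this
    exact this
  have hU : U * Uᵀ = 1 := by
    have := Unitary.mul_star_self_of_mem hH.eigenvectorUnitary.2
    exact this
  have hdet : U.det * U.det = 1 := by
    have := congrArg Matrix.det hU
    simpa using this
  let A' := Uᵀ * A * U
  have hA' : A'ᵀ = -A' := by
    simp [A', Matrix.transpose_mul, hA, Matrix.mul_assoc]
  refine ⟨_, fun S => det_piecewise_nonneg A' hA' hH.eigenvalues (hP.eigenvalues_nonneg) S, ?_⟩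
  intro u
  rw [← det_expand]
  have : B + u • A = U * (Matrix.diagonal hH.eigenvalues + u • A') * Uᵀ := by
    rw [Matrix.mul_add, Matrix.add_mul, ← hsp]
    congr 1
    have : U * (u • A') * Uᵀ = u • ((U * Uᵀ) * A * (U * Uᵀ)) := by
      simp [A', Matrix.mul_assoc]
    rw [this, hU]; simp
  rw [this, Matrix.det_mul, Matrix.det_mul, Matrix.det_transpose]
  linear_combination (Matrix.diagonal hH.eigenvalues + u • A').det * hdet

lemma pf_block_congr {n : ℕ} (M C : Matrix (Fin n ⊕ Fin n) (Fin n ⊕ Fin n) ℝ) :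
    pf ((M * C * Mᵀ).submatrix (blockIndex n).symm (blockIndex n).symm) =
      M.det * pf (C.submatrix (blockIndex n).symm (blockIndex n).symm) := by
  rw [← Matrix.det_submatrix_equiv_self (blockIndex n).symm M, ← pf_congr,
    Matrix.transpose_submatrix, Matrix.submatrix_mul_equiv, Matrix.submatrix_mul_equiv]

lemma pf_block {n : ℕ} (A B : Matrix (Fin n) (Fin n) ℝ)
    (hA : Aᵀ = -A) (hBsymm : Bᵀ = B) (u : ℝ) :
    pf ((Matrix.fromBlocks (-((u ^ 2) • A)) B (-B) A).submatrix
            (blockIndex n).symm (blockIndex n).symm) = (B + u • A).det * pf (JJ n) := by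
  have e1 : Matrix.fromBlocks (-((u ^ 2) • A)) B (-B) A =
      (Matrix.fromBlocks 1 (-(u • 1)) 0 1 * Matrix.fromBlocks (B + u • A) 0 0 1 *
        Matrix.fromBlocks 1 0 (((1 : ℝ) / 2) • A) 1) * Matrix.fromBlocks 0 1 (-1) 0 *
      (Matrix.fromBlocks 1 (-(u • 1)) 0 1 * Matrix.fromBlocks (B + u • A) 0 0 1 *
        Matrix.fromBlocks 1 0 (((1 : ℝ) / 2) • A) 1)ᵀ := by
    simp only [Matrix.fromBlocks_transpose, Matrix.fromBlocks_multiply]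
    simp only [Matrix.mul_one, Matrix.one_mul, Matrix.mul_zero, Matrix.zero_mul, add_zero,
      zero_add, Matrix.transpose_one, Matrix.transpose_add, Matrix.transpose_smul, hA, hBsymm,
      Matrix.transpose_neg, Matrix.mul_neg, Matrix.neg_mul, Matrix.mul_smul, Matrix.smul_mul]
    rw [Matrix.fromBlocks_inj]
    refine ⟨?_, ?_, ?_, ?_⟩ <;> module
  rw [e1, pf_block_congr, Matrix.det_mul, Matrix.det_mul]
  simp [Matrix.det_fromBlocks_zero₂₁, Matrix.det_fromBlocks_zero₁₂, JJ]

theorem pfaffian_block_coeffs_nonneg (n : ℕ) (A B : Matrix (Fin n) (Fin n) ℝ)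
    (hA : Aᵀ = -A) (hBsymm : Bᵀ = B)
    (hBpsd : ∀ x : Fin n → ℝ, 0 ≤ x ⬝ᵥ B *ᵥ x)
    (p : ℕ → ℝ)
    (hp : ∀ l : ℝ,
      (-1 : ℝ) ^ (n / 2) *
          pf ((Matrix.fromBlocks (-(l • A)) B (-B) A).submatrix
            (blockIndex n).symm (blockIndex n).symm)
        = ∑ t ∈ Finset.range (n / 2 + 1), p t * l ^ t) :
    ∀ t ≤ n / 2, 0 ≤ p t := by
  obtain ⟨a, ha, hdet⟩ := det_coeffs A B hA hBsymm hBpsd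
  set c := (-1 : ℝ) ^ (n / 2) * pf (JJ n) with hc
  have hc0 : 0 ≤ c := pf_JJ_nonneg n
  have hpoly : (∑ t ∈ Finset.range (n / 2 + 1), Polynomial.monomial (2 * t) (p t)) =
      ∑ S : Finset (Fin n), Polynomial.monomial S.card (c * a S) := by
    apply Polynomial.funext
    intro u
    have h := hp (u ^ 2)
    rw [pf_block A B hA hBsymm u, hdet] at h
    simp only [Polynomial.eval_finsetSum, Polynomial.eval_monomial]
    simp only [pow_mul]
    rw [← h, hc, mul_left_comm, mul_comm, Finset.mul_sum]
    refine Finset.sum_congr rfl fun S _ => by ring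
  intro t ht
  have := congrArg (fun q => Polynomial.coeff q (2 * t)) hpoly
  simp only [Polynomial.finsetSum_coeff, Polynomial.coeff_monomial] at this
  rw [Finset.sum_eq_single t] at this
  · rw [if_pos rfl] at this
    rw [this]
    refine Finset.sum_nonneg fun S _ => ?_
    split_ifs
    · exact mul_nonneg hc0 (ha S)
    · exact le_rfl
  · intro b _ hb
    rw [if_neg (by omega)]
  · intro h
    exact absurd (Finset.mem_range.2 (by omega)) h
end

section
/- Let A and B be real n×n matrices with A antisymmetric and B symmetric positive definite, and let λ ≥ 0 be a real number. Then (−1)^{⌊n/2⌋} · pf [[−λA, B], [−B, A]] = det B holds if and only if λA = 0. -/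
open Matrix BigOperators

theorem exists_sqrt_aux {n : ℕ} (A : Matrix (Fin n) (Fin n) ℝ) (hA : Aᵀ = -A) (l : ℝ) (hl : 0 ≤ l) :
    ∃ R : Matrix (Fin n) (Fin n) ℝ, R.PosSemidef ∧ R * R = 1 - l • (A * A) ∧ A * R = R * A := by
  have hH : (1 - l • (A * A)).PosSemidef := by
    have h2 : 1 - l • (A * A) = 1 + l • (Aᴴ * A) := by
      rw [conjTranspose_eq_transpose_of_trivial, hA]; simp [sub_eq_add_neg]
    rw [h2]
    exact PosSemidef.one.add ((posSemidef_conjTranspose_mul_self A).smul hl)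
  open scoped MatrixOrder in
  refine ⟨CFC.sqrt (1 - l • (A * A)), (CFC.sqrt_nonneg _).posSemidef, CFC.sqrt_mul_sqrt_self _ hH.nonneg, ?_⟩
  open scoped MatrixOrder in
  rw [CFC.sqrt_eq_real_sqrt _ hH.nonneg]
  have := IsSelfAdjoint.commute_cfcₙ (a := 1 - l • (A * A)) (b := A) hH.1 (by
    show _ * _ = _ * _
    simp [sub_mul, mul_sub, mul_assoc]) Real.sqrt
  exact this.symm

theorem det_one_aux {n : ℕ} (H : Matrix (Fin n) (Fin n) ℝ) (hH : H.PosSemidef) (h : (1 + H).det = 1) :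
    H = 0 := by
  have hK : (1 + H).PosSemidef := PosSemidef.one.add hH
  have h1 : ∀ i, 1 ≤ hK.1.eigenvalues i := by
    intro i
    have e := hK.1.eigenvalues_eq i
    rw [add_mulVec, one_mulVec, dotProduct_add] at e
    have h3 := hH.dotProduct_mulVec_nonneg (hK.1.eigenvectorBasis i).ofLp
    have h4 : star (hK.1.eigenvectorBasis i).ofLp ⬝ᵥ (hK.1.eigenvectorBasis i).ofLp = 1 := by
      have := hK.1.eigenvectorBasis.orthonormal.1 i
      have h5 : inner ℝ (hK.1.eigenvectorBasis i) (hK.1.eigenvectorBasis i) = (1:ℝ) := by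
        rw [real_inner_self_eq_norm_sq, this]; norm_num
      rw [EuclideanSpace.inner_eq_star_dotProduct] at h5
      rw [dotProduct_comm]; exact h5
    rw [e, h4]; simpa using h3
  have h2 := hK.1.det_eq_prod_eigenvalues
  have h3 : ∀ i, hK.1.eigenvalues i = 1 := by
    by_contra! hc
    obtain ⟨j, hj⟩ := hc
    have : ∏ i : Fin n, (1:ℝ) < ∏ i, hK.1.eigenvalues i :=
      Finset.prod_lt_prod (fun _ _ => one_pos) (fun i _ => h1 i) ⟨j, Finset.mem_univ _, lt_of_le_of_ne (h1 j) (Ne.symm hj)⟩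
    rw [h] at h2
    simp at this h2
    linarith
  have h4 := hK.1.trace_eq_sum_eigenvalues
  simp [h3] at h4
  exact hH.trace_eq_zero_iff.1 h4

/-- unnormalised pfaffian over pairs -/
noncomputable def pfT {n : ℕ} (C : Matrix (Fin n × Bool) (Fin n × Bool) ℝ) : ℝ :=
  ∑ ρ : Equiv.Perm (Fin n × Bool), ((Equiv.Perm.sign ρ : ℤ) : ℝ) *
    ∏ i, C (ρ (i, false)) (ρ (i, true))

theorem pfT_congr {n : ℕ} (P C : Matrix (Fin n × Bool) (Fin n × Bool) ℝ) :
    pfT (P * C * Pᵀ) = P.det * pfT C := by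
  have h1 : ∀ ρ : Equiv.Perm (Fin n × Bool),
      ∏ i, (P * C * Pᵀ) (ρ (i, false)) (ρ (i, true)) =
      ∑ f : Fin n × Bool → Fin n × Bool, (∏ x, P (ρ x) (f x)) * ∏ i, C (f (i, false)) (f (i, true)) := by
    intro ρ
    have h2 : ∀ x y, (P * C * Pᵀ) x y = ∑ p : (Fin n × Bool) × (Fin n × Bool),
        P x p.1 * P y p.2 * C p.1 p.2 := by
      intro x y
      simp only [mul_apply, transpose_apply, Finset.sum_mul]
      rw [Finset.sum_comm, Fintype.sum_prod_type (f := fun p : (Fin n × Bool) × (Fin n × Bool) => P x p.1 * P y p.2 * C p.1 p.2)]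
      refine Finset.sum_congr rfl fun a _ => Finset.sum_congr rfl fun b _ => by ring
    simp only [h2]
    rw [Finset.prod_univ_sum, Fintype.piFinset_univ]
    let e : (Fin n × Bool → Fin n × Bool) ≃ (Fin n → (Fin n × Bool) × (Fin n × Bool)) :=
      (Equiv.curry _ _ _).trans (Equiv.arrowCongr (Equiv.refl _) (Equiv.boolArrowEquivProd _))
    rw [← e.sum_comp]
    refine Finset.sum_congr rfl fun f _ => ?_
    rw [Fintype.prod_prod_type, ← Finset.prod_mul_distrib]
    refine Finset.prod_congr rfl fun i _ => ?_
    rw [Fintype.prod_bool]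
    simp only [e, Equiv.trans_apply, Equiv.arrowCongr_apply, Function.comp, Equiv.curry_apply, Equiv.boolArrowEquivProd_apply, Function.curry, Equiv.refl_symm, Equiv.refl_apply]
    ring
  have h3 : pfT (P * C * Pᵀ) = ∑ f : Fin n × Bool → Fin n × Bool,
      (P.submatrix id f).det * ∏ i, C (f (i, false)) (f (i, true)) := by
    unfold pfT
    simp only [h1, Finset.mul_sum]
    rw [Finset.sum_comm]
    refine Finset.sum_congr rfl fun f _ => ?_
    rw [det_apply', Finset.sum_mul]
    refine Finset.sum_congr rfl fun ρ _ => ?_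
    simp only [submatrix_apply, id]
    ring
  rw [h3]
  unfold pfT
  rw [Finset.mul_sum]
  symm
  refine Finset.sum_of_injOn (fun ρ : Equiv.Perm (Fin n × Bool) => (ρ : Fin n × Bool → Fin n × Bool)) ?_ ?_ ?_ ?_
  · intro a _ b _ h; exact DFunLike.coe_injective h
  · intro a _; simp
  · intro f _ hf
    have : ¬ Function.Injective f := by
      intro hi
      apply hf
      exact ⟨Equiv.ofBijective f (Finite.injective_iff_bijective.1 hi), by simp, by ext <;> rfl⟩
    rw [Function.Injective] at this
    push Not at this
    obtain ⟨a, b, hab, hne⟩ := this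
    rw [det_zero_of_column_eq hne, zero_mul]
    intro k; simp [hab]
  · intro ρ _
    rw [det_permute']
    ring

def cIdx (n : ℕ) : Fin n × Bool ≃ Fin n ⊕ Fin n :=
  (Equiv.prodComm _ _).trans (Equiv.boolProdEquivSum _)

noncomputable def pfB {n : ℕ} (M : Matrix (Fin n ⊕ Fin n) (Fin n ⊕ Fin n) ℝ) : ℝ :=
  pfT (M.submatrix (cIdx n) (cIdx n))

theorem pfB_congr {n : ℕ} (P C : Matrix (Fin n ⊕ Fin n) (Fin n ⊕ Fin n) ℝ) :
    pfB (P * C * Pᵀ) = P.det * pfB C := by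
  unfold pfB
  rw [← submatrix_mul_equiv _ _ _ (cIdx n) _, ← submatrix_mul_equiv _ _ _ (cIdx n) _, ← transpose_submatrix, pfT_congr,
    det_submatrix_equiv_self]

theorem pfB_J (n : ℕ) : pfB (fromBlocks 0 1 (-1) 0 : Matrix (Fin n ⊕ Fin n) (Fin n ⊕ Fin n) ℝ) = n.factorial * 2 ^ n := by
  let Φ : Equiv.Perm (Fin n) × (Fin n → Equiv.Perm Bool) → Equiv.Perm (Fin n × Bool) :=
    fun p => (Equiv.prodCongrRight p.2).trans (Equiv.prodCongrLeft fun _ => p.1)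
  have hΦ : ∀ p x, Φ p x = (p.1 x.1, p.2 x.1 x.2) := by intro p x; rfl
  have hc : (Finset.univ : Finset (Equiv.Perm (Fin n) × (Fin n → Equiv.Perm Bool))).card = n.factorial * 2 ^ n := by
    simp [Fintype.card_perm]
  let J := (fromBlocks 0 1 (-1) 0 : Matrix (Fin n ⊕ Fin n) (Fin n ⊕ Fin n) ℝ).submatrix (cIdx n) (cIdx n)
  have hJ : ∀ x y, J x y = if x.1 = y.1 ∧ x.2 ≠ y.2 then (if x.2 then -1 else 1) else 0 := by
    rintro ⟨i, a⟩ ⟨j, b⟩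
    cases a <;> cases b <;> simp [J, cIdx, Equiv.boolProdEquivSum, one_apply]
    split_ifs <;> simp
  show pfT J = _
  unfold pfT
  have : ((n.factorial * 2 ^ n : ℕ) : ℝ) = ∑ p : Equiv.Perm (Fin n) × (Fin n → Equiv.Perm Bool), (1:ℝ) := by
    rw [Finset.sum_const, hc]; simp
  push_cast at this
  rw [this]
  symm
  refine Finset.sum_of_injOn Φ ?_ ?_ ?_ ?_
  · rintro ⟨τ, s⟩ _ ⟨τ', s'⟩ _ h
    have hx : ∀ i b, τ i = τ' i ∧ s i b = s' i b := by
      intro i b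
      have := congrArg (fun q : Equiv.Perm (Fin n × Bool) => q (i, b)) h
      simpa [hΦ] using this
    ext
    · rw [show τ = τ' from Equiv.ext fun i => (hx i true).1]
    · rw [show s = s' from funext fun i => Equiv.ext fun b => (hx i b).2]
  · intro _ _; simp
  · intro ρ _ hρ
    by_contra h0
    apply hρ
    have hne := right_ne_zero_of_mul h0
    rw [Finset.prod_ne_zero_iff] at hne
    have h1 : ∀ i, (ρ (i, false)).1 = (ρ (i, true)).1 ∧ (ρ (i, false)).2 ≠ (ρ (i, true)).2 := by
      intro i
      have := hne i (Finset.mem_univ _)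
      rw [hJ] at this
      by_contra hcon
      rw [if_neg hcon] at this
      exact this rfl
    have hall : ∀ i b, (ρ (i, b)).1 = (ρ (i, true)).1 := by
      intro i b; cases b
      · exact (h1 i).1
      · rfl
    have hτ : Function.Bijective fun i => (ρ (i, true)).1 := by
      rw [← Finite.surjective_iff_bijective]
      intro j
      obtain ⟨⟨i, b⟩, hi⟩ := ρ.surjective (j, true)
      exact ⟨i, by simp only []; rw [← hall i b, hi]⟩
    have hs : ∀ i, Function.Bijective fun b => (ρ (i, b)).2 := by
      intro i
      rw [← Finite.injective_iff_bijective]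
      intro a b hab
      have := (h1 i).2
      cases a <;> cases b <;> simp_all
    refine ⟨(Equiv.ofBijective _ hτ, fun i => Equiv.ofBijective _ (hs i)), by simp, ?_⟩
    refine Equiv.ext ?_
    rintro ⟨i, b⟩
    rw [hΦ]
    ext
    · simp [hall i b]
    · simp
  · rintro ⟨τ, s⟩ _
    have hsg : Equiv.Perm.sign (Φ (τ, s)) = ∏ i, Equiv.Perm.sign (s i) := by
      simp only [Φ]
      rw [Equiv.Perm.sign_trans, Equiv.Perm.sign_prodCongrRight, Equiv.Perm.sign_prodCongrLeft]
      simp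
    rw [hsg]
    simp only [hΦ, hJ]
    push_cast
    rw [← Finset.prod_mul_distrib]
    symm
    apply Finset.prod_eq_one
    intro i _
    generalize s i = t
    revert t
    have : ∀ t : Equiv.Perm Bool, t = 1 ∨ t = Equiv.swap false true := by decide
    intro t
    rcases this t with rfl | rfl
    · simp
    · simp

/-- interleaved index -/
def iIdx (n : ℕ) : Fin n × Bool ≃ Fin (2 * n) where
  toFun x := ⟨2 * x.1.val + (if x.2 then 1 else 0), by have := x.1.2; split_ifs <;> omega⟩
  invFun k := (⟨k.val / 2, by omega⟩, decide (k.val % 2 = 1))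
  left_inv := by
    rintro ⟨i, b⟩
    cases b <;> simp <;> (ext; simp; try omega)
  right_inv := by
    intro k
    ext
    simp
    split_ifs <;> omega

/-- comparison permutation -/
def sIdx (n : ℕ) : Equiv.Perm (Fin (2 * n)) :=
  (iIdx n).symm.trans ((cIdx n).trans (blockIndex n))

theorem sIdx_val (n : ℕ) (k : Fin (2 * n)) :
    (sIdx n k).val = k.val / 2 + (if k.val % 2 = 1 then n else 0) := by
  obtain ⟨⟨i, b⟩, rfl⟩ := (iIdx n).surjective k
  cases b
  · simp [sIdx, iIdx, cIdx, blockIndex, Equiv.boolProdEquivSum]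
  · simp [sIdx, iIdx, cIdx, blockIndex, Equiv.boolProdEquivSum]
    try omega

theorem card_odd_aux (b : ℕ) : ∀ N, 2 * b ≤ N →
    (Finset.univ.filter fun i : Fin N => i.val < 2 * b ∧ i.val % 2 = 1).card = b := by
  intro N hN
  let g : Fin b → Fin N := fun a => ⟨2 * a.val + 1, by omega⟩
  have hg : ∀ a, (g a).val = 2 * a.val + 1 := fun _ => rfl
  have hinj : Function.Injective g := by
    intro x y h
    have h2 := congrArg Fin.val h
    rw [hg, hg] at h2
    exact Fin.ext (by omega)
  have : (Finset.univ.filter fun i : Fin N => i.val < 2 * b ∧ i.val % 2 = 1)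
      = (Finset.univ : Finset (Fin b)).image g := by
    ext i
    simp only [Finset.mem_filter, Finset.mem_univ, true_and, Finset.mem_image]
    constructor
    · rintro ⟨h1, h2⟩
      refine ⟨⟨i.val / 2, by omega⟩, Fin.ext ?_⟩
      rw [hg]
      show 2 * (i.val / 2) + 1 = i.val
      omega
    · rintro ⟨a, rfl⟩
      have := a.2
      rw [hg]
      omega
  rw [this, Finset.card_image_of_injective _ hinj]
  simp

theorem sign_sIdx (n : ℕ) : Equiv.Perm.sign (sIdx n) = (-1) ^ (n / 2) := by
  rw [Equiv.Perm.sign_eq_prod_prod_Iio, ← (iIdx n).prod_comp, Fintype.prod_prod_type]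
  have h : ∀ i : Fin n, ∏ b : Bool, ∏ j ∈ Finset.Iio (iIdx n (i, b)),
      (if sIdx n j < sIdx n (iIdx n (i, b)) then (1 : ℤˣ) else -1) = (-1) ^ i.val := by
    intro i
    rw [Fintype.prod_bool]
    have ht : ∏ j ∈ Finset.Iio (iIdx n (i, true)),
      (if sIdx n j < sIdx n (iIdx n (i, true)) then (1 : ℤˣ) else -1) = 1 := by
      apply Finset.prod_eq_one
      intro j hj
      rw [if_pos]
      have h1 := Finset.mem_Iio.1 hj
      rw [Fin.lt_def] at h1 ⊢
      rw [sIdx_val, sIdx_val]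
      simp [iIdx] at h1 ⊢
      have := j.2
      split_ifs <;> omega
    rw [ht, one_mul, Finset.prod_ite]
    simp only [Finset.prod_const, one_pow, one_mul]
    congr 1
    rw [← card_odd_aux i.val (2 * n) (by omega)]
    congr 1
    ext j
    simp only [Finset.mem_filter, Finset.mem_Iio, Finset.mem_univ, true_and, Fin.lt_def, sIdx_val]
    simp [iIdx]
    intro h1
    have := i.2
    split_ifs with h2
    · simp [h2]; omega
    · simp [h2]; omega
  rw [Finset.prod_congr rfl fun i _ => h i, Fin.prod_univ_eq_prod_range (fun i => (-1 : ℤˣ) ^ i)]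
  induction n with
  | zero => simp
  | succ m ih =>
    clear h ih
    induction m + 1 using Nat.strong_induction_on with
    | _ k ih =>
      match k with
      | 0 => simp
      | 1 => simp
      | k + 2 =>
        rw [Finset.prod_range_succ, Finset.prod_range_succ, ih k (by omega)]
        rw [show (k + 2) / 2 = k / 2 + 1 by omega, mul_assoc, ← pow_add, pow_succ (-1 : ℤˣ) (k / 2)]
        congr 1
        exact Odd.neg_one_pow ⟨k, by ring⟩

theorem pf_eq_pfB {n : ℕ} (M : Matrix (Fin n ⊕ Fin n) (Fin n ⊕ Fin n) ℝ) :
    pf (M.submatrix (blockIndex n).symm (blockIndex n).symm)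
      = (1 / (n.factorial * 2 ^ n) : ℝ) * ((-1) ^ (n / 2) * pfB M) := by
  unfold pf pfB pfT
  congr 1
  rw [Finset.mul_sum]
  symm
  refine Fintype.sum_equiv (Equiv.equivCongr (iIdx n) ((cIdx n).trans (blockIndex n))) _ _ ?_
  intro ρ
  have hs : (Equiv.equivCongr (iIdx n) ((cIdx n).trans (blockIndex n))) ρ
      = ((iIdx n).permCongr ρ).trans (sIdx n) := by
    ext x; simp [sIdx]
  have hsg : Equiv.Perm.sign ((Equiv.equivCongr (iIdx n) ((cIdx n).trans (blockIndex n))) ρ) =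
      (-1) ^ (n / 2) * Equiv.Perm.sign ρ := by
    rw [hs, Equiv.Perm.sign_trans, sign_sIdx, Equiv.Perm.sign_permCongr]
  rw [hsg, ← mul_assoc]
  have h0 : ∀ i : Fin n, (iIdx n).symm ⟨2 * i.val, by omega⟩ = (i, false) := by
    intro i; rw [Equiv.symm_apply_eq]; simp [iIdx]
  have h1 : ∀ i : Fin n, (iIdx n).symm ⟨2 * i.val + 1, by omega⟩ = (i, true) := by
    intro i; rw [Equiv.symm_apply_eq]; simp [iIdx]
  congr 1
  · push_cast; rfl
  · refine Finset.prod_congr rfl fun i _ => ?_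
    simp [h0, h1]

theorem pfB_RA {n : ℕ} (R A : Matrix (Fin n) (Fin n) ℝ) (hR : Rᵀ = R) (hA : Aᵀ = -A) :
    pfB (fromBlocks 0 R (-R) A) = R.det * (n.factorial * 2 ^ n) := by
  have h : fromBlocks 0 R (-R) A =
      fromBlocks R 0 ((1 / 2 : ℝ) • A) 1 * fromBlocks 0 1 (-1) 0 * (fromBlocks R 0 ((1 / 2 : ℝ) • A) 1)ᵀ := by
    rw [fromBlocks_transpose, fromBlocks_multiply, fromBlocks_multiply]
    simp [hR, hA]
    rw [← add_smul]; norm_num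
  rw [h, pfB_congr, pfB_J, det_fromBlocks_zero₁₂]
  simp

theorem pfB_one {n : ℕ} (A R : Matrix (Fin n) (Fin n) ℝ) (hA : Aᵀ = -A) (l : ℝ)
    (hR : R.PosSemidef) (hRR : R * R = 1 - l • (A * A)) (hc : A * R = R * A) :
    pfB (fromBlocks (-(l • A)) 1 (-1) A) = R.det * (n.factorial * 2 ^ n) := by
  have hRt : Rᵀ = R := by
    have := hR.1.eq
    rwa [conjTranspose_eq_transpose_of_trivial] at this
  have hu : IsUnit (1 + R).det := (PosDef.one.add_posSemidef hR).det_pos.ne'.isUnit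
  set Q := (1 + R)⁻¹ with hQ
  have hQ1 : Q * (1 + R) = 1 := nonsing_inv_mul _ hu
  have hQ2 : (1 + R) * Q = 1 := mul_nonsing_inv _ hu
  have hQA : A * Q = Q * A := by
    calc A * Q = (Q * (1 + R)) * (A * Q) := by rw [hQ1, one_mul]
      _ = Q * ((1 + R) * A) * Q := by simp only [mul_assoc]
      _ = Q * (A * (1 + R)) * Q := by
        rw [show (1 + R) * A = A * (1 + R) by rw [add_mul, mul_add, hc, one_mul, mul_one]]
      _ = Q * A * ((1 + R) * Q) := by simp only [mul_assoc]
      _ = Q * A := by rw [hQ2, mul_one]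
  have hQt : Qᵀ = Q := by rw [hQ, transpose_nonsing_inv]; simp [hRt]
  -- X is antisymmetric
  set X := -(l • (Q * A)) with hX
  have hXt : Xᵀ = -X := by
    simp [hX, transpose_mul, hA, hQt, hQA]
  have h1 : 1 + X * A = R := by
    have h2 : (1 + R) * (1 + X * A) = (1 + R) * R := by
      have : (1 + R) * (X * A) = -(l • (A * A)) := by
        rw [hX]
        simp only [neg_mul, mul_neg, smul_mul_assoc, mul_smul_comm]
        rw [← mul_assoc, ← mul_assoc, hQ2, one_mul]
      rw [mul_add, this, add_mul 1 R R, hRR]; simp only [mul_one, one_mul]; abel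
    calc 1 + X * A = Q * ((1 + R) * (1 + X * A)) := by rw [← mul_assoc, hQ1, one_mul]
      _ = R := by rw [h2, ← mul_assoc, hQ1, one_mul]
  have h3 : X + R * X = -(l • A) := by
    have : X + R * X = (1 + R) * X := by rw [add_mul, one_mul]
    rw [this, hX]
    simp only [mul_neg, mul_smul_comm]
    rw [← mul_assoc, hQ2, one_mul]
  have h4 : 1 + A * X = R := by
    have := congrArg transpose h1
    simpa [transpose_mul, hXt, hA, hRt] using this
  have key : fromBlocks 1 X 0 1 * fromBlocks (-(l • A)) 1 (-1) A * (fromBlocks 1 X 0 1)ᵀ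
      = fromBlocks 0 R (-R) A := by
    rw [fromBlocks_transpose, fromBlocks_multiply, fromBlocks_multiply]
    simp only [hXt, transpose_one, transpose_zero, one_mul, mul_one, mul_zero, zero_mul, add_zero, zero_add, h1, mul_neg]
    congr 1
    · rw [← h3]; abel
    · rw [← h4]; abel
  have := pfB_congr (fromBlocks 1 X 0 1) (fromBlocks (-(l • A)) 1 (-1) A)
  rw [key, pfB_RA _ _ hRt hA, det_fromBlocks_zero₂₁] at this
  simpa using this.symm

theorem pfaffian_block_eq_det_iff (n : ℕ) (A B : Matrix (Fin n) (Fin n) ℝ)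
    (hA : Aᵀ = -A) (hBsymm : Bᵀ = B)
    (hBpd : ∀ x : Fin n → ℝ, x ≠ 0 → 0 < x ⬝ᵥ B *ᵥ x)
    (l : ℝ) (hl : 0 ≤ l) :
    (-1 : ℝ) ^ (n / 2) *
        pf ((Matrix.fromBlocks (-(l • A)) B (-B) A).submatrix
          (blockIndex n).symm (blockIndex n).symm) = B.det
      ↔ l • A = 0 := by
  have hB : B.PosDef := by
    refine PosDef.of_dotProduct_mulVec_pos ?_ ?_
    · rw [IsHermitian, conjTranspose_eq_transpose_of_trivial, hBsymm]
    · intro x hx; simpa using hBpd x hx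
  obtain ⟨S, hSt, hSS⟩ : ∃ S : Matrix (Fin n) (Fin n) ℝ, Sᵀ = S ∧ S * S = B := by
    open scoped MatrixOrder in
    refine ⟨CFC.sqrt B, ?_, CFC.sqrt_mul_sqrt_self _ hB.posSemidef.nonneg⟩
    open scoped MatrixOrder in
    have := (CFC.sqrt_nonneg B).posSemidef.1.eq
    rwa [conjTranspose_eq_transpose_of_trivial] at this
  have hdet : S.det * S.det = B.det := by rw [← det_mul, hSS]
  have hBdet := hB.det_pos
  have hu : IsUnit S.det := by
    rw [isUnit_iff_ne_zero]; intro h; rw [h] at hdet; simp at hdet; linarith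
  have hi1 : S⁻¹ * S = 1 := nonsing_inv_mul _ hu
  have hi2 : S * S⁻¹ = 1 := mul_nonsing_inv _ hu
  have hit : S⁻¹ᵀ = S⁻¹ := by rw [transpose_nonsing_inv, hSt]
  set A' := S⁻¹ * A * S⁻¹ with hA'
  have hA't : A'ᵀ = -A' := by simp [hA', transpose_mul, hit, hA, mul_assoc]
  have hAA : S * A' * S = A := by
    calc S * A' * S = (S * S⁻¹) * A * (S⁻¹ * S) := by rw [hA']; simp only [mul_assoc]
      _ = A := by rw [hi1, hi2, one_mul, mul_one]
  obtain ⟨R, hR, hRR, hc⟩ := exists_sqrt_aux A' hA't l hl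
  have key : fromBlocks S 0 0 S * fromBlocks (-(l • A')) 1 (-1) A' * (fromBlocks S 0 0 S)ᵀ
      = fromBlocks (-(l • A)) B (-B) A := by
    rw [fromBlocks_transpose, fromBlocks_multiply, fromBlocks_multiply]
    simp [hSt, hSS, hAA]
  have hpf : (-1 : ℝ) ^ (n / 2) *
        pf ((Matrix.fromBlocks (-(l • A)) B (-B) A).submatrix
          (blockIndex n).symm (blockIndex n).symm) = B.det * R.det := by
    rw [pf_eq_pfB, ← key, pfB_congr, pfB_one A' R hA't l hR hRR hc, det_fromBlocks_zero₂₁, hdet]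
    have h1 : ((-1 : ℝ) ^ (n / 2)) * (-1) ^ (n / 2) = 1 := by rw [← mul_pow]; simp
    have h2 : (n.factorial : ℝ) ≠ 0 := by exact_mod_cast n.factorial_ne_zero
    field_simp
    linear_combination R.det * h1
  rw [hpf, mul_eq_left₀ hBdet.ne']
  have h2 : 1 - l • (A' * A') = 1 + l • (A'ᴴ * A') := by
    rw [conjTranspose_eq_transpose_of_trivial, hA't]; simp [sub_eq_add_neg]
  constructor
  · intro h
    have h3 : (1 + l • (A'ᴴ * A')).det = 1 := by rw [← h2, ← hRR, det_mul, h, one_mul]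
    have h4 := det_one_aux _ ((posSemidef_conjTranspose_mul_self A').smul hl) h3
    rcases smul_eq_zero.1 h4 with h5 | h5
    · simp [h5]
    · rw [conjTranspose_mul_self_eq_zero] at h5
      rw [← hAA, h5]; simp
  · intro h
    have h5 : l • (A' * A') = 0 := by
      rw [← smul_mul_assoc, hA', ← smul_mul_assoc, ← mul_smul_comm, h]; simp
    have h6 : R.det * R.det = 1 := by rw [← det_mul, hRR, h5]; simp
    have := hR.det_nonneg
    nlinarith
end

section
/- Let A and B be real n×n matrices with A antisymmetric and B symmetric, and let p_t be the coefficients defined by the polynomial identity (−1)^{⌊n/2⌋} · pf [[−λA, B], [−B, A]] = Σ_{t=0}^{⌊n/2⌋} p_t λ^t (as polynomials in the real variable λ). Then for each t, p_t = Σ_S Σ_T (−1)^S (−1)^T · pf A_{S,S} · pf A_{T,T} · det B_{N∖S, N∖T}, where the sums run over all subsets S, T of N = {1, ..., n} with |S| = |T| = 2t, A_{S,S} is the submatrix of A with rows and columns indexed by S, B_{N∖S,N∖T} is the submatrix of B with rows indexed by N∖S and columns indexed by N∖T, and for a subset T of size 2t one sets (−1)^T = (−1)^{t + Σ_{j∈T}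 j}. -/
open Matrix BigOperators

/-- The monotone enumeration of a subset `S` of `Fin n` of prescribed cardinality `k`,
as a map `Fin k → Fin n`. -/
def enum {n k : ℕ} (S : Finset (Fin n)) (h : S.card = k) : Fin k → Fin n :=
  fun i => (S.orderIsoOfFin h i : Fin n)

/-- The sign `(-1)^S = (-1)^{t + Σ_{j ∈ S} j}` attached to a `2t`-element subset `S`
of `{1, …, n}` (elements of `Fin n` are numbered `1, …, n`, i.e. `j ∈ Fin n`
contributes `j + 1` to the sum). -/
def subsetSign {n : ℕ} (t : ℕ) (S : Finset (Fin n)) : ℝ :=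
  (-1 : ℝ) ^ (t + ∑ j ∈ S, (j.val + 1))


section PfaffAux

variable {M : Type*} [AddCommGroup M] [Module ℝ M]

theorem enum_inj {n k : ℕ} (S : Finset (Fin n)) (h : S.card = k) :
    Function.Injective (enum S h) := by
  intro i j hij
  exact (S.orderIsoOfFin h).injective (Subtype.ext hij)

theorem enum_range {n k : ℕ} (S : Finset (Fin n)) (h : S.card = k) (x : Fin n) :
    x ∈ S ↔ ∃ i, enum S h i = x := by
  constructor
  · intro hx
    exact ⟨(S.orderIsoOfFin h).symm ⟨x, hx⟩, by simp [enum]⟩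
  · rintro ⟨i, rfl⟩
    exact (S.orderIsoOfFin h i).2

/-- Group a sum over functions, vanishing off the injective ones, by image. -/
theorem sum_group {n k : ℕ} {V : Type*} [AddCommMonoid V] (F : (Fin k → Fin n) → V)
    (hF : ∀ v, ¬ Function.Injective v → F v = 0) :
    ∑ v, F v = ∑ S : {S : Finset (Fin n) // S.card = k}, ∑ π : Equiv.Perm (Fin k),
      F (enum S.1 S.2 ∘ π) := by
  rw [← Fintype.sum_prod_type']
  symm
  apply Fintype.sum_of_injective
    (fun x : {S : Finset (Fin n) // S.card = k} × Equiv.Perm (Fin k) => enum x.1.1 x.1.2 ∘ x.2)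
  · rintro ⟨⟨S, hS⟩, π⟩ ⟨⟨T, hT⟩, σ⟩ h
    have hST : S = T := by
      ext x
      rw [enum_range S hS, enum_range T hT]
      constructor
      · rintro ⟨i, rfl⟩
        refine ⟨σ (π.symm i), ?_⟩
        have := congrFun h (π.symm i)
        simpa using this.symm
      · rintro ⟨i, rfl⟩
        refine ⟨π (σ.symm i), ?_⟩
        have := congrFun h (σ.symm i)
        simpa using this
    subst hST
    congr 1
    ext i
    have := congrFun h i
    exact congrArg Fin.val (enum_inj S hS this)
  · intro v hv
    apply hF
    intro hinj
    apply hv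
    have hc : (Finset.univ.image v).card = k := by
      rw [Finset.card_image_of_injective _ hinj]; simp
    let f : Fin k → Fin k := fun i =>
      ((Finset.univ.image v).orderIsoOfFin hc).symm ⟨v i, by simp⟩
    have hf : Function.Injective f := by
      intro i j hij
      have := ((Finset.univ.image v).orderIsoOfFin hc).symm.injective hij
      exact hinj (congrArg Subtype.val this)
    refine ⟨⟨⟨Finset.univ.image v, hc⟩, Equiv.ofBijective f (Finite.injective_iff_bijective.1 hf)⟩, ?_⟩
    funext i
    simp [enum, f]
  · intro x; rfl

open ExteriorAlgebra

theorem ι_swap (x y : M) : ι ℝ x * ι ℝ y = - (ι ℝ y * ι ℝ x) :=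
  eq_neg_of_add_eq_zero_left (ι_add_mul_swap x y)

theorem ιMulti_cons {k : ℕ} (a : M) (v : Fin k → M) :
    ιMulti ℝ (k + 1) (Fin.cons a v : Fin (k + 1) → M) = ι ℝ a * ιMulti ℝ k v := by
  simp only [ιMulti_apply, List.ofFn_succ, List.prod_cons, Fin.cons_zero, Fin.cons_succ]

theorem ι_mul_ιMulti (a : M) {k : ℕ} (v : Fin k → M) :
    ι ℝ a * ιMulti ℝ k v = (-1 : ℝ) ^ k • (ιMulti ℝ k v * ι ℝ a) := by
  induction k with
  | zero => simp
  | succ k ih =>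
    have : v = (Fin.cons (v 0) (Fin.tail v) : Fin (k + 1) → M) := (Fin.cons_self_tail v).symm
    rw [this, ιMulti_cons, ← mul_assoc, ι_swap a, neg_mul, mul_assoc, ih, pow_succ]
    simp [mul_assoc]

theorem ιMulti_even_comm {k l : ℕ} (hk : Even k) (v : Fin k → M) (w : Fin l → M) :
    ιMulti ℝ l w * ιMulti ℝ k v = ιMulti ℝ k v * ιMulti ℝ l w := by
  induction l with
  | zero => simp
  | succ k ih =>
    have : w = (Fin.cons (w 0) (Fin.tail w) : Fin (k + 1) → M) := (Fin.cons_self_tail w).symm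
    rw [this, ιMulti_cons, mul_assoc, ih, ← mul_assoc, ι_mul_ιMulti, hk.neg_one_pow, one_smul,
      mul_assoc]

theorem pow_expand {κ : Type*} [Fintype κ] (A : Matrix κ κ ℝ) (c : κ → M) (s : ℕ) :
    (∑ i, ∑ j, A i j • (ι ℝ (c i) * ι ℝ (c j))) ^ s =
      ∑ v : Fin (2 * s) → κ, (∏ i : Fin s, A (v ⟨2 * i.val, by omega⟩) (v ⟨2 * i.val + 1, by omega⟩)) •
        ιMulti ℝ (2 * s) (c ∘ v) := by
  induction s with
  | zero => simp
  | succ s ih =>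
    rw [pow_succ', ih]
    have e1 : ∀ F : (Fin (2 * s + 1 + 1) → κ) → ExteriorAlgebra ℝ M,
        ∑ v, F v = ∑ a, ∑ b, ∑ u : Fin (2 * s) → κ, F (Fin.cons a (Fin.cons b u)) := by
      intro F
      rw [← (Fin.consEquiv (fun _ => κ)).sum_comp, Fintype.sum_prod_type]
      refine Finset.sum_congr rfl fun a _ => ?_
      rw [← (Fin.consEquiv (fun _ => κ)).sum_comp, Fintype.sum_prod_type]
      rfl
    refine Eq.trans ?_ (e1 _).symm
    rw [Finset.sum_mul]
    refine Finset.sum_congr rfl fun a _ => ?_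
    rw [Finset.sum_mul]
    refine Finset.sum_congr rfl fun b _ => ?_
    rw [Finset.mul_sum]
    refine Finset.sum_congr rfl fun u _ => ?_
    have h1 : ιMulti ℝ (2 * (s + 1)) (c ∘ (Fin.cons a (Fin.cons b u : Fin (2 * s + 1) → κ) : Fin (2 * s + 1 + 1) → κ))
        = ι ℝ (c a) * (ι ℝ (c b) * ιMulti ℝ (2 * s) (c ∘ u)) := by
      rw [← ιMulti_cons, ← ιMulti_cons]
      show ιMulti ℝ (2 * s + 1 + 1) _ = _
      congr 1
      funext i
      refine Fin.cases ?_ (fun i => Fin.cases ?_ (fun i => ?_) i) i <;> simp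
    rw [h1, Fin.prod_univ_succ, smul_mul_smul_comm, mul_assoc]
    rfl

theorem pow_pf {n : ℕ} (A : Matrix (Fin n) (Fin n) ℝ) (c : Fin n → M) (s : ℕ) :
    (∑ i, ∑ j, A i j • (ι ℝ (c i) * ι ℝ (c j))) ^ s =
      ((s.factorial * 2 ^ s : ℝ)) • ∑ S : {S : Finset (Fin n) // S.card = 2 * s},
        pf (A.submatrix (enum S.1 S.2) (enum S.1 S.2)) • ιMulti ℝ (2 * s) (c ∘ enum S.1 S.2) := by
  rw [pow_expand, sum_group, Finset.smul_sum]
  · refine Finset.sum_congr rfl fun S _ => ?_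
    have hs : (s.factorial * 2 ^ s : ℝ) ≠ 0 := by positivity
    rw [smul_smul, pf, ← mul_assoc, mul_one_div_cancel hs, one_mul, Finset.sum_smul]
    refine Finset.sum_congr rfl fun π _ => ?_
    have := (ιMulti ℝ (2 * s)).map_perm (c ∘ enum S.1 S.2) π
    rw [← Function.comp_assoc]
    rw [this, Units.smul_def, ← Int.cast_smul_eq_zsmul ℝ, smul_smul, mul_comm]
    rfl
  · intro v hv
    rw [ιMulti_eq_zero_of_not_inj, smul_zero]
    intro h; exact hv h.of_comp

theorem pow_pf_top {m : ℕ} (A : Matrix (Fin (2 * m)) (Fin (2 * m)) ℝ) (c : Fin (2 * m) → M) :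
    (∑ i, ∑ j, A i j • (ι ℝ (c i) * ι ℝ (c j))) ^ m =
      ((m.factorial * 2 ^ m : ℝ)) • pf A • ιMulti ℝ (2 * m) c := by
  rw [pow_expand]
  symm
  have hs : (m.factorial * 2 ^ m : ℝ) ≠ 0 := by positivity
  rw [smul_smul, pf, ← mul_assoc, mul_one_div_cancel hs, one_mul, Finset.sum_smul]
  apply Fintype.sum_of_injective (fun π : Equiv.Perm (Fin (2 * m)) => (π : Fin (2 * m) → Fin (2 * m)))
  · exact DFunLike.coe_injective
  · intro v hv
    rw [ιMulti_eq_zero_of_not_inj, smul_zero]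
    intro h
    exact hv ⟨Equiv.ofBijective v (Finite.injective_iff_bijective.1 h.of_comp), rfl⟩
  · intro π
    have := (ιMulti ℝ (2 * m)).map_perm c π
    rw [this, Units.smul_def, ← Int.cast_smul_eq_zsmul ℝ, smul_smul, mul_comm]

theorem neg_one_half_succ (r : ℕ) : (-1 : ℝ) ^ ((r + 1) / 2) = (-1) ^ (r / 2) * (-1) ^ r := by
  rcases Nat.even_or_odd' r with ⟨k, rfl | rfl⟩
  · rw [show (2 * k + 1) / 2 = k by omega, show 2 * k / 2 = k by omega]; simp
  · rw [show (2 * k + 1 + 1) / 2 = k + 1 by omega, show (2 * k + 1) / 2 = k by omega, pow_succ,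
      pow_succ _ (2 * k)]; simp

theorem powB_expand {κ : Type*} [Fintype κ] (B : Matrix κ κ ℝ) (e f : κ → M) (r : ℕ) :
    (∑ i, ∑ j, B i j • (ι ℝ (e i) * ι ℝ (f j))) ^ r =
      (-1 : ℝ) ^ (r / 2) • ∑ v : Fin r → κ, ∑ w : Fin r → κ, (∏ i : Fin r, B (v i) (w i)) •
        (ιMulti ℝ r (e ∘ v) * ιMulti ℝ r (f ∘ w)) := by
  induction r with
  | zero => simp
  | succ r ih =>
    rw [pow_succ', ih, neg_one_half_succ]
    have e1 : ∀ F : (Fin (r + 1) → κ) → (Fin (r + 1) → κ) → ExteriorAlgebra ℝ M,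
        ∑ v, ∑ w, F v w = ∑ a, ∑ b, ∑ v : Fin r → κ, ∑ w : Fin r → κ,
          F (Fin.cons a v) (Fin.cons b w) := by
      intro F
      rw [← (Fin.consEquiv (fun _ => κ)).sum_comp, Fintype.sum_prod_type]
      refine Finset.sum_congr rfl fun a _ => ?_
      rw [Finset.sum_comm (s := (Finset.univ : Finset κ))]
      refine Finset.sum_congr rfl fun v _ => ?_
      rw [← (Fin.consEquiv (fun _ => κ)).sum_comp, Fintype.sum_prod_type]
      rfl
    rw [e1, mul_smul_comm, mul_smul]
    congr 1
    rw [Finset.sum_mul, Finset.smul_sum]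
    refine Finset.sum_congr rfl fun a _ => ?_
    rw [Finset.sum_mul, Finset.smul_sum]
    refine Finset.sum_congr rfl fun b _ => ?_
    rw [Finset.mul_sum, Finset.smul_sum]
    refine Finset.sum_congr rfl fun v _ => ?_
    rw [Finset.mul_sum, Finset.smul_sum]
    refine Finset.sum_congr rfl fun w _ => ?_
    have h1 : ∀ (c : κ → M) (a : κ) (u : Fin r → κ),
        ιMulti ℝ (r + 1) (c ∘ (Fin.cons a u : Fin (r + 1) → κ))
        = ι ℝ (c a) * ιMulti ℝ r (c ∘ u) := by
      intro c a u
      rw [← ιMulti_cons]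
      congr 1
      funext i
      refine Fin.cases ?_ (fun i => ?_) i <;> simp
    rw [h1, h1, Fin.prod_univ_succ, smul_mul_smul_comm, smul_comm]
    simp only [Fin.cons_zero, Fin.cons_succ]
    congr 1
    calc _ = ι ℝ (e a) * (ι ℝ (f b) * ιMulti ℝ r (e ∘ v)) * ιMulti ℝ r (f ∘ w) := by
            simp only [mul_assoc]
      _ = _ := by
        rw [ι_mul_ιMulti]; simp only [mul_assoc, smul_mul_assoc, mul_smul_comm]

theorem powB {n : ℕ} (B : Matrix (Fin n) (Fin n) ℝ) (e f : Fin n → M) (r : ℕ) :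
    (∑ i, ∑ j, B i j • (ι ℝ (e i) * ι ℝ (f j))) ^ r =
      ((-1 : ℝ) ^ (r / 2) * r.factorial) • ∑ S : {S : Finset (Fin n) // S.card = r},
        ∑ T : {S : Finset (Fin n) // S.card = r},
        (B.submatrix (enum S.1 S.2) (enum T.1 T.2)).det •
          (ιMulti ℝ r (e ∘ enum S.1 S.2) * ιMulti ℝ r (f ∘ enum T.1 T.2)) := by
  rw [powB_expand, mul_smul]
  congr 1
  rw [sum_group]
  swap
  · intro v hv
    refine Finset.sum_eq_zero fun w _ => ?_
    rw [ιMulti_eq_zero_of_not_inj, zero_mul, smul_zero]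
    intro h; exact hv h.of_comp
  rw [Finset.smul_sum]
  refine Finset.sum_congr rfl fun S _ => ?_
  have : ∀ π : Equiv.Perm (Fin r), ∑ w : Fin r → Fin n, (∏ i : Fin r, B ((enum S.1 S.2 ∘ π) i) (w i)) •
        (ιMulti ℝ r (e ∘ enum S.1 S.2 ∘ π) * ιMulti ℝ r (f ∘ w)) =
      ∑ T : {S : Finset (Fin n) // S.card = r},
        (B.submatrix (enum S.1 S.2) (enum T.1 T.2)).det •
          (ιMulti ℝ r (e ∘ enum S.1 S.2) * ιMulti ℝ r (f ∘ enum T.1 T.2)) := by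
    intro π
    rw [sum_group]
    swap
    · intro v hv
      rw [ιMulti_eq_zero_of_not_inj (v := f ∘ v), mul_zero, smul_zero]
      intro h; exact hv h.of_comp
    refine Finset.sum_congr rfl fun T _ => ?_
    rw [← Matrix.det_transpose, Matrix.det_apply', Finset.sum_smul]
    rw [← Equiv.sum_comp (Equiv.mulRight π)]
    refine Finset.sum_congr rfl fun σ _ => ?_
    rw [← Function.comp_assoc, ← Function.comp_assoc]
    have h1 := (ιMulti ℝ r).map_perm (e ∘ enum S.1 S.2) π
    have h2 := (ιMulti ℝ r).map_perm (f ∘ enum T.1 T.2) (σ * π)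
    simp only [Equiv.coe_mulRight]
    rw [h1, h2, Units.smul_def, Units.smul_def, ← Int.cast_smul_eq_zsmul ℝ,
      ← Int.cast_smul_eq_zsmul ℝ, smul_mul_smul_comm, smul_smul]
    congr 1
    have h3 : ∏ i, B ((enum S.1 S.2 ∘ π) i) ((enum T.1 T.2 ∘ (σ * π : Equiv.Perm (Fin r))) i) =
        ∏ i, (B.submatrix (enum S.1 S.2) (enum T.1 T.2))ᵀ (σ i) i := by
      rw [← Equiv.prod_comp π (fun i => (B.submatrix (enum S.1 S.2) (enum T.1 T.2))ᵀ (σ i) i)]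
      simp
    rw [h3, mul_comm]
    congr 1
    rcases Int.units_eq_one_or (Equiv.Perm.sign π) with h | h <;> simp [h]
  rw [Finset.sum_congr rfl fun π _ => this π]
  simp only [Finset.sum_const, Finset.card_univ, Fintype.card_perm, Fintype.card_fin]
  rw [← Nat.cast_smul_eq_nsmul ℝ]

theorem ofFn_enum {n k : ℕ} (S : Finset (Fin n)) (h : S.card = k) :
    List.ofFn (enum S h) = (List.finRange n).filter (· ∈ S) := by
  have h1 : (List.ofFn (enum S h)).SortedLT := by
    apply StrictMono.sortedLT_ofFn
    intro i j hij
    exact (S.orderIsoOfFin h).strictMono hij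
  have h2 : ((List.finRange n).filter (· ∈ S)).SortedLT :=
    ((List.sortedLT_finRange n).pairwise.filter _).sortedLT
  refine List.Perm.eq_of_pairwise' (r := (· < ·)) h1.pairwise h2.pairwise ?_
  rw [List.perm_ext_iff_of_nodup h1.nodup h2.nodup]
  intro a
  simp [List.mem_ofFn, enum_range S h]

theorem ι_mul_list (a : M) (l : List M) :
    (l.map (ι ℝ)).prod * ι ℝ a = (-1 : ℝ) ^ l.length • (ι ℝ a * (l.map (ι ℝ)).prod) := by
  induction l with
  | nil => simp
  | cons x l ih =>
    simp only [List.map_cons, List.prod_cons, List.length_cons, pow_succ]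
    rw [mul_assoc, ih, ← mul_assoc (ι ℝ a), ι_swap a x]
    simp [mul_assoc]

theorem list_split {κ : Type*} (c : κ → M) (val : κ → ℕ) (p : κ → Bool) (l : List κ) (a : ℕ)
    (hl : l.map val = List.range' a l.length) :
    (((l.filter p).map c).map (ι ℝ)).prod * (((l.filter (fun x => !p x)).map c).map (ι ℝ)).prod =
      (-1 : ℝ) ^ (((l.filter p).map val).sum + a * (l.filter p).length
        + (l.filter p).length.choose 2) • ((l.map c).map (ι ℝ)).prod := by
  induction l generalizing a with
  | nil => simp
  | cons x l ih =>
    simp only [List.map_cons, List.length_cons, List.range'_succ, List.cons.injEq] at hl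
    obtain ⟨hx, hl⟩ := hl
    have ih := ih (a + 1) hl
    cases hp : p x with
    | true =>
      simp only [List.filter_cons, hp, if_true, Bool.not_true, Bool.false_eq_true, if_false,
        List.map_cons, List.prod_cons, List.sum_cons, List.length_cons, mul_assoc, ih, hx,
        mul_smul_comm]
      congr 1
      rw [show (List.length (l.filter p) + 1).choose 2 =
        (l.filter p).length + (l.filter p).length.choose 2 by
          rw [Nat.choose_succ_succ' _ 1]; simp]
      have : ∀ u v w : ℕ, (-1 : ℝ) ^ (u + (a + 1) * v + w) = (-1) ^ (a + u + a * (v + 1) + (v + w)) := by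
        intro u v w
        rw [show a + u + a * (v + 1) + (v + w) = 2 * a + (u + (a + 1) * v + w) by ring, pow_add _ (2 * a), pow_mul]
        simp
      exact this _ _ _
    | false =>
      simp only [List.filter_cons, hp, if_true, Bool.not_false, Bool.false_eq_true, if_false,
        List.map_cons, List.prod_cons]
      rw [← mul_assoc, ι_mul_list, smul_mul_assoc, mul_assoc, ih, mul_smul_comm, smul_smul,
        List.length_map]
      congr 1
      have : ∀ u v w : ℕ, (-1 : ℝ) ^ v * (-1 : ℝ) ^ (u + (a + 1) * v + w) = (-1) ^ (u + a * v + w) := by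
        intro u v w
        rw [← pow_add, show v + (u + (a + 1) * v + w) = 2 * v + (u + a * v + w) by ring, pow_add _ (2 * v), pow_mul]
        simp
      exact this _ _ _

theorem ιMulti_list {κ : Type*} (c : κ → M) {k : ℕ} (v : Fin k → κ) :
    ιMulti ℝ k (c ∘ v) = (((List.ofFn v).map c).map (ι ℝ)).prod := by
  rw [ιMulti_apply]; simp [List.map_ofFn, Function.comp_def]

theorem neg_one_choose (t : ℕ) : (-1 : ℝ) ^ ((2 * t).choose 2) = (-1) ^ t := by
  induction t with
  | zero => simp
  | succ t ih =>
    rw [show 2 * (t + 1) = 2 * t + 1 + 1 by ring, Nat.choose_succ_succ' _ 1,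
      Nat.choose_succ_succ' _ 1, pow_add, pow_add, ih, pow_succ (-1 : ℝ) t]
    simp [pow_succ, pow_mul]

theorem ιMulti_compl {n t k l : ℕ} (c : Fin n → M) (S : Finset (Fin n)) (h : S.card = k)
    (hk : k = 2 * t) (h' : Sᶜ.card = l) :
    ιMulti ℝ k (c ∘ enum S h) * ιMulti ℝ l (c ∘ enum Sᶜ h') =
      subsetSign t S • ιMulti ℝ n c := by
  rw [ιMulti_list, ιMulti_list, ofFn_enum, ofFn_enum]
  have := list_split c (fun i : Fin n => i.val) (fun x => decide (x ∈ S)) (List.finRange n) 0 (by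
    simp [List.range_eq_range'])
  have e2 : (List.finRange n).filter (fun x => decide (x ∈ Sᶜ)) =
      (List.finRange n).filter (fun x => !decide (x ∈ S)) := by
    congr 1; funext x; simp
  rw [e2, this]
  have hlen : ((List.finRange n).filter (fun x => decide (x ∈ S))).length = k := by
    rw [← ofFn_enum S h]; simp
  have hsum : (((List.finRange n).filter (fun x => decide (x ∈ S))).map (fun i : Fin n => i.val)).sum
      = ∑ j ∈ S, j.val := by
    rw [← ofFn_enum S h, List.map_ofFn, List.sum_ofFn, ← Finset.sum_coe_sort S]
    exact Equiv.sum_comp (S.orderIsoOfFin h).toEquiv (fun x : S => (x : Fin n).val)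
  rw [hlen, hsum]
  congr 1
  · rw [subsetSign, zero_mul, add_zero, pow_add, hk, neg_one_choose, Finset.sum_add_distrib]
    simp only [Finset.sum_const, h, hk, pow_add, pow_mul, smul_eq_mul, mul_one]
    rw [neg_one_sq, one_pow, mul_one, mul_comm]
  · rw [ιMulti_apply]; simp [List.ofFn_eq_map, Function.comp_def]

theorem ιMulti_not_disjoint {n k l : ℕ} (c : Fin n → M) (S T : Finset (Fin n)) (hS : S.card = k)
    (hT : T.card = l) (h : ¬ Disjoint S T) :
    ιMulti ℝ k (c ∘ enum S hS) * ιMulti ℝ l (c ∘ enum T hT) = 0 := by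
  rw [ιMulti_mul_ιMulti]
  apply ιMulti_eq_zero_of_not_inj
  rw [Finset.not_disjoint_iff] at h
  obtain ⟨x, hxS, hxT⟩ := h
  obtain ⟨i, hi⟩ := (enum_range S hS x).1 hxS
  obtain ⟨j, hj⟩ := (enum_range T hT x).1 hxT
  intro hinj
  have : Fin.castAdd l i = Fin.natAdd k j := by
    apply hinj
    simp [hi, hj]
  have := congrArg Fin.val this
  simp at this
  omega

/-- The coefficient in the theorem. -/
noncomputable def qcoef {n : ℕ} (A B : Matrix (Fin n) (Fin n) ℝ) (t : ℕ) : ℝ :=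
  ∑ S : {S : Finset (Fin n) // S.card = 2 * t},
              ∑ T : {T : Finset (Fin n) // T.card = 2 * t},
        subsetSign t S.1 * subsetSign t T.1 *
          pf (A.submatrix (enum S.1 S.2) (enum S.1 S.2)) *
          pf (A.submatrix (enum T.1 T.2) (enum T.1 T.2)) *
          (B.submatrix
            (enum (S.1ᶜ) (by simp [Finset.card_compl, S.2] : (S.1ᶜ).card = n - 2 * t))
            (enum (T.1ᶜ) (by simp [Finset.card_compl, T.2] : (T.1ᶜ).card = n - 2 * t))).det

noncomputable def Xel {n : ℕ} (A : Matrix (Fin n) (Fin n) ℝ) (c : Fin n → M) (s : ℕ) :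
    ExteriorAlgebra ℝ M :=
  ∑ S : {S : Finset (Fin n) // S.card = 2 * s},
        pf (A.submatrix (enum S.1 S.2) (enum S.1 S.2)) • ιMulti ℝ (2 * s) (c ∘ enum S.1 S.2)

noncomputable def Zel {n : ℕ} (B : Matrix (Fin n) (Fin n) ℝ) (e f : Fin n → M) (r : ℕ) :
    ExteriorAlgebra ℝ M :=
  ∑ S : {S : Finset (Fin n) // S.card = r},
        ∑ T : {S : Finset (Fin n) // S.card = r},
        (B.submatrix (enum S.1 S.2) (enum T.1 T.2)).det •
          (ιMulti ℝ r (e ∘ enum S.1 S.2) * ιMulti ℝ r (f ∘ enum T.1 T.2))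

theorem compl_of_disjoint {n k l : ℕ} (S T : Finset (Fin n)) (hS : S.card = k) (hT : T.card = l)
    (h : Disjoint S T) (hkl : n ≤ k + l) : T = Sᶜ := by
  apply Finset.eq_of_subset_of_card_le
  · intro x hx
    rw [Finset.mem_compl]
    exact fun hxS => Finset.disjoint_left.1 h hxS hx
  · rw [Finset.card_compl, Fintype.card_fin]; omega

theorem card_of_disjoint {n k l : ℕ} (S T : Finset (Fin n)) (hS : S.card = k) (hT : T.card = l)
    (h : Disjoint S T) : k + l ≤ n := by
  rw [← hS, ← hT, ← Finset.card_union_of_disjoint h]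
  exact (Finset.card_le_univ _).trans (by simp)

theorem XZX {n : ℕ} (A B : Matrix (Fin n) (Fin n) ℝ) (e f : Fin n → M) (s t r : ℕ)
    (h : s + t + r = n) :
    Xel A e s * Zel B e f r * Xel A f t =
      (if s = t then qcoef A B s else 0) • (ιMulti ℝ n e * ιMulti ℝ n f) := by
  have h1 : Xel A e s * Zel B e f r * Xel A f t =
      ∑ S : {S : Finset (Fin n) // S.card = 2 * s}, ∑ T : {T : Finset (Fin n) // T.card = 2 * t},
        (pf (A.submatrix (enum S.1 S.2) (enum S.1 S.2)) *
          pf (A.submatrix (enum T.1 T.2) (enum T.1 T.2))) •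
        ∑ S' : {S : Finset (Fin n) // S.card = r}, ∑ T' : {S : Finset (Fin n) // S.card = r},
        (B.submatrix (enum S'.1 S'.2) (enum T'.1 T'.2)).det •
          ((ιMulti ℝ (2 * s) (e ∘ enum S.1 S.2) * ιMulti ℝ r (e ∘ enum S'.1 S'.2)) *
          (ιMulti ℝ (2 * t) (f ∘ enum T.1 T.2) * ιMulti ℝ r (f ∘ enum T'.1 T'.2))) := by
    rw [Xel, Xel, Finset.sum_mul, Finset.sum_mul]
    refine Finset.sum_congr rfl fun S _ => ?_
    rw [Finset.mul_sum]
    refine Finset.sum_congr rfl fun T _ => ?_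
    rw [smul_mul_assoc, smul_mul_smul_comm]
    congr 1
    rw [Zel, Finset.mul_sum, Finset.sum_mul]
    refine Finset.sum_congr rfl fun S' _ => ?_
    rw [Finset.mul_sum, Finset.sum_mul]
    refine Finset.sum_congr rfl fun T' _ => ?_
    rw [mul_smul_comm, smul_mul_assoc]
    congr 1
    rw [← ιMulti_even_comm (even_two_mul t)]
    simp only [mul_assoc]
  rw [h1]
  split_ifs with hst
  · subst hst
    obtain rfl : r = n - 2 * s := by omega
    rw [qcoef, Finset.sum_smul]
    refine Finset.sum_congr rfl fun S _ => ?_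
    rw [Finset.sum_smul]
    refine Finset.sum_congr rfl fun T _ => ?_
    rw [Fintype.sum_eq_single (⟨S.1ᶜ, by simp [Finset.card_compl, S.2]⟩ :
      {S : Finset (Fin n) // S.card = n - 2 * s})]
    swap
    · intro S' hS'
      refine Finset.sum_eq_zero fun T' _ => ?_
      rw [ιMulti_not_disjoint e, zero_mul, smul_zero]
      intro hd
      exact hS' (Subtype.ext (compl_of_disjoint _ _ S.2 S'.2 hd (by omega)))
    rw [Fintype.sum_eq_single (⟨T.1ᶜ, by simp [Finset.card_compl, T.2]⟩ :
      {S : Finset (Fin n) // S.card = n - 2 * s})]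
    swap
    · intro T' hT'
      rw [ιMulti_not_disjoint f, mul_zero, smul_zero]
      intro hd
      exact hT' (Subtype.ext (compl_of_disjoint _ _ T.2 T'.2 hd (by omega)))
    rw [ιMulti_compl e S.1 S.2 rfl, ιMulti_compl f T.1 T.2 rfl, smul_mul_smul_comm, smul_smul,
      smul_smul]
    congr 1
    ring
  · rw [zero_smul]
    refine Finset.sum_eq_zero fun S _ => Finset.sum_eq_zero fun T _ => ?_
    rw [Finset.sum_eq_zero, smul_zero]
    intro S' _
    refine Finset.sum_eq_zero fun T' _ => ?_
    by_cases hd : Disjoint S.1 S'.1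
    · have c1 := card_of_disjoint _ _ S.2 S'.2 hd
      rw [ιMulti_not_disjoint f, mul_zero, smul_zero]
      intro hd'
      have c2 := card_of_disjoint _ _ T.2 T'.2 hd'
      omega
    · rw [ιMulti_not_disjoint e _ _ _ _ hd, zero_mul, smul_zero]

/-- The bilinear even element attached to a matrix. -/
noncomputable def bel {n : ℕ} (B : Matrix (Fin n) (Fin n) ℝ) (e f : Fin n → M) :
    ExteriorAlgebra ℝ M := ∑ i, ∑ j, B i j • (ι ℝ (e i) * ι ℝ (f j))

theorem commute_ι_pair (a b c d : M) :
    Commute (ι ℝ a * ι ℝ b) (ι ℝ c * ι ℝ d) := by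
  have h : ∀ x : M, Commute (ι ℝ a * ι ℝ b) (ι ℝ x) := by
    intro x
    show _ * _ = _ * _
    rw [mul_assoc, ι_swap b x, mul_neg, ← mul_assoc, ι_swap a x]
    simp [mul_assoc]
  exact (h c).mul_right (h d)

theorem commute_bel {n : ℕ} (A B : Matrix (Fin n) (Fin n) ℝ) (a b c d : Fin n → M) :
    Commute (bel A a b) (bel B c d) := by
  refine Commute.sum_left _ _ _ fun i _ => Commute.sum_left _ _ _ fun j _ =>
    Commute.sum_right _ _ _ fun k _ => Commute.sum_right _ _ _ fun l _ => ?_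
  exact ((commute_ι_pair _ _ _ _).smul_left _).smul_right _

theorem term_eq {n : ℕ} (A B : Matrix (Fin n) (Fin n) ℝ) (e f : Fin n → M) (s t r : ℕ)
    (h : s + t + r = n) :
    bel A e e ^ s * bel A f f ^ t * bel B e f ^ r =
      (s.factorial * 2 ^ s * (t.factorial * 2 ^ t) * ((-1) ^ (r / 2) * r.factorial) *
        (if s = t then qcoef A B s else 0) : ℝ) • (ιMulti ℝ n e * ιMulti ℝ n f) := by
  rw [mul_assoc, ((commute_bel A B f f e f).pow_pow t r).eq, ← mul_assoc]
  have h1 : bel A e e ^ s = _ := pow_pf A e s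
  have h2 : bel A f f ^ t = _ := pow_pf A f t
  have h3 : bel B e f ^ r = _ := powB B e f r
  rw [h1, h2, h3]
  have := XZX A B e f s t r h
  rw [Xel, Xel, Zel] at this
  rw [smul_mul_smul_comm, smul_mul_smul_comm, this, smul_smul]
  congr 1
  ring

theorem smul_smul_smul_mul (a b c d : ℝ) (x y z : ExteriorAlgebra ℝ M) :
    a • (b • (c • x * y) * d • z) = (a * b * c * d) • (x * y * z) := by
  simp only [smul_mul_assoc, mul_smul_comm, smul_smul]
  congr 1
  ring

theorem omega_pow {n : ℕ} (A B : Matrix (Fin n) (Fin n) ℝ) (e f : Fin n → M) (l : ℝ) :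
    ((-l) • bel A e e + bel A f f + (2 : ℝ) • bel B e f) ^ n =
      (n.factorial * 2 ^ n * ∑ m ∈ Finset.range (n + 1), ∑ s ∈ Finset.range (m + 1),
        (-l) ^ s * (-1) ^ ((n - m) / 2) * (if s = m - s then qcoef A B s else 0) : ℝ) •
        (ιMulti ℝ n e * ιMulti ℝ n f) := by
  have c1 : Commute ((-l) • bel A e e) (bel A f f) := (commute_bel _ _ _ _ _ _).smul_left _
  have c2 : Commute ((-l) • bel A e e + bel A f f) ((2 : ℝ) • bel B e f) := by
    refine Commute.smul_right (Commute.add_left ?_ ?_) _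
    · exact (commute_bel _ _ _ _ _ _).smul_left _
    · exact commute_bel _ _ _ _ _ _
  rw [c2.add_pow, Finset.mul_sum, Finset.sum_smul]
  refine Finset.sum_congr rfl fun m hm => ?_
  rw [c1.add_pow, Finset.mul_sum, Finset.sum_smul, Finset.sum_mul, Finset.sum_mul]
  refine Finset.sum_congr rfl fun s hs => ?_
  rw [Finset.mem_range] at hm hs
  have ht := term_eq A B e f s (m - s) (n - m) (by omega)
  rw [smul_pow, smul_pow, ← nsmul_eq_mul', ← nsmul_eq_mul', ← Nat.cast_smul_eq_nsmul ℝ,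
    ← Nat.cast_smul_eq_nsmul ℝ, smul_smul_smul_mul, ht, smul_smul]
  congr 1
  have f1 : (m.choose s * s.factorial * (m - s).factorial : ℝ) = m.factorial := by
    exact_mod_cast Nat.choose_mul_factorial_mul_factorial (by omega : s ≤ m)
  have f2 : (n.choose m * m.factorial * (n - m).factorial : ℝ) = n.factorial := by
    exact_mod_cast Nat.choose_mul_factorial_mul_factorial (by omega : m ≤ n)
  have f3 : (2 : ℝ) ^ n = 2 ^ s * 2 ^ (m - s) * 2 ^ (n - m) := by
    rw [← pow_add, ← pow_add]; congr 1; omega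
  rw [← f2, ← f1, f3]
  ring

theorem double_sum (n : ℕ) (h : ℕ → ℕ → ℝ) (q : ℕ → ℝ) :
    ∑ m ∈ Finset.range (n + 1), ∑ s ∈ Finset.range (m + 1),
        h s m * (if s = m - s then q s else 0) =
      ∑ s ∈ Finset.range (n / 2 + 1), h s (2 * s) * q s := by
  have h1 : ∀ m ∈ Finset.range (n + 1), ∑ s ∈ Finset.range (m + 1),
        h s m * (if s = m - s then q s else 0) =
      ∑ s ∈ Finset.range (n / 2 + 1), if m = 2 * s then h s m * q s else 0 := by
    intro m hm
    rw [Finset.mem_range] at hm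
    have e1 : ∑ s ∈ Finset.range (m + 1), h s m * (if s = m - s then q s else 0) =
        ∑ s ∈ Finset.range (m + 1), if m = 2 * s then h s m * q s else 0 := by
      refine Finset.sum_congr rfl fun s hs => ?_
      rw [Finset.mem_range] at hs
      by_cases hc : m = 2 * s
      · rw [if_pos hc, if_pos (by omega)]
      · rw [if_neg hc, if_neg (by omega), mul_zero]
    rw [e1]
    have e2 := Finset.sum_subset (s₁ := Finset.range (m + 1)) (s₂ := Finset.range (n + 1))
      (f := fun s => if m = 2 * s then h s m * q s else 0)
      (by intro x; simp only [Finset.mem_range]; omega) (by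
        intro x _ hx
        rw [Finset.mem_range] at hx
        exact if_neg (by omega))
    have e3 := Finset.sum_subset (s₁ := Finset.range (n / 2 + 1)) (s₂ := Finset.range (n + 1))
      (f := fun s => if m = 2 * s then h s m * q s else 0)
      (by intro x; simp only [Finset.mem_range]; omega) (by
        intro x _ hx
        rw [Finset.mem_range] at hx
        exact if_neg (by omega))
    rw [e2, e3]
  rw [Finset.sum_congr rfl h1, Finset.sum_comm]
  refine Finset.sum_congr rfl fun s hs => ?_
  rw [Finset.mem_range] at hs
  rw [Finset.sum_ite_eq' , if_pos]
  rw [Finset.mem_range]; omega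

theorem omega_eq {n : ℕ} (A B : Matrix (Fin n) (Fin n) ℝ) (hB : Bᵀ = B)
    (e f : Fin n → M) (l : ℝ) :
    (∑ i, ∑ j, ((Matrix.fromBlocks (-(l • A)) B (-B) A).submatrix
            (blockIndex n).symm (blockIndex n).symm) i j •
        (ι ℝ ((Sum.elim e f ∘ (blockIndex n).symm) i) * ι ℝ ((Sum.elim e f ∘ (blockIndex n).symm) j))) =
      (-l) • bel A e e + bel A f f + (2 : ℝ) • bel B e f := by
  have h0 : ∀ F : (Fin n ⊕ Fin n) → (Fin n ⊕ Fin n) → ExteriorAlgebra ℝ M,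
      ∑ i, ∑ j, F ((blockIndex n).symm i) ((blockIndex n).symm j) = ∑ i, ∑ j, F i j := by
    intro F
    rw [← Equiv.sum_comp (blockIndex n).symm]
    refine Finset.sum_congr rfl fun i _ => ?_
    rw [← Equiv.sum_comp (blockIndex n).symm]
  refine (h0 (fun x y => (Matrix.fromBlocks (-(l • A)) B (-B) A) x y •
    (ι ℝ (Sum.elim e f x) * ι ℝ (Sum.elim e f y)))).trans ?_
  simp only [Fintype.sum_sum_type, Finset.sum_add_distrib, Matrix.fromBlocks_apply₁₁,
    Matrix.fromBlocks_apply₁₂, Matrix.fromBlocks_apply₂₁, Matrix.fromBlocks_apply₂₂, Sum.elim_inl,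
    Sum.elim_inr]
  have h1 : ∑ i, ∑ j, (-(l • A)) i j • (ι ℝ (e i) * ι ℝ (e j)) = (-l) • bel A e e := by
    simp [bel, Finset.smul_sum, smul_smul]
  have h2 : ∑ i, ∑ j, (-B) i j • (ι ℝ (f i) * ι ℝ (e j)) = bel B e f := by
    rw [bel, Finset.sum_comm]
    refine Finset.sum_congr rfl fun i _ => Finset.sum_congr rfl fun j _ => ?_
    rw [ι_swap]
    have : B j i = B i j := congrFun (congrFun hB i) j
    simp [this]
  have h3 : bel B e f = ∑ i, ∑ j, B i j • (ι ℝ (e i) * ι ℝ (f j)) := rfl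
  have h4 : bel A f f = ∑ i, ∑ j, A i j • (ι ℝ (f i) * ι ℝ (f j)) := rfl
  rw [h1, h2, ← h3, ← h4, two_smul]
  abel

theorem top_eq {n : ℕ} (e f : Fin n → M) :
    ιMulti ℝ (2 * n) (Sum.elim e f ∘ (blockIndex n).symm) = ιMulti ℝ n e * ιMulti ℝ n f := by
  rw [ιMulti_mul_ιMulti, ιMulti_apply, ιMulti_apply, List.ofFn_congr (two_mul n)]
  congr 2
  funext i
  refine Fin.addCases (fun i => ?_) (fun i => ?_) i
  · have : (blockIndex n).symm (Fin.cast (two_mul n).symm (Fin.castAdd n i)) = Sum.inl i := by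
      rw [Equiv.symm_apply_eq]; ext; simp [blockIndex]
    simp [this]
  · have : (blockIndex n).symm (Fin.cast (two_mul n).symm (Fin.natAdd n i)) = Sum.inr i := by
      rw [Equiv.symm_apply_eq]; ext; simp [blockIndex]
    simp only [Function.comp_apply, this, Sum.elim_inr, Fin.append_right]

theorem top_ne_zero (N : ℕ) : ιMulti ℝ N (Pi.basisFun ℝ (Fin N)) ≠ 0 := by
  intro h
  let F : ∀ k, (Fin N → ℝ) [⋀^Fin k]→ₗ[ℝ] ℝ := fun k =>
    if hk : k = N then hk ▸ (Pi.basisFun ℝ (Fin N)).det else 0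
  have h1 := liftAlternating_apply_ιMulti F (Pi.basisFun ℝ (Fin N))
  rw [h, map_zero] at h1
  have h2 : F N = (Pi.basisFun ℝ (Fin N)).det := by simp only [F, dite_true]
  rw [h2, Module.Basis.det_self] at h1
  exact zero_ne_one h1

theorem pf_formula {n : ℕ} (A B : Matrix (Fin n) (Fin n) ℝ) (hB : Bᵀ = B) (l : ℝ) :
    pf ((Matrix.fromBlocks (-(l • A)) B (-B) A).submatrix
            (blockIndex n).symm (blockIndex n).symm) =
      ∑ s ∈ Finset.range (n / 2 + 1), (-l) ^ s * (-1) ^ ((n - 2 * s) / 2) * qcoef A B s := by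
  rw [← double_sum n (fun s m => (-l) ^ s * (-1) ^ ((n - m) / 2))]
  let b := Pi.basisFun ℝ (Fin (2 * n))
  let e : Fin n → (Fin (2 * n) → ℝ) := fun i => b (blockIndex n (Sum.inl i))
  let f : Fin n → (Fin (2 * n) → ℝ) := fun i => b (blockIndex n (Sum.inr i))
  have hb : Sum.elim e f ∘ (blockIndex n).symm = b := by
    funext i
    obtain ⟨x, rfl⟩ := (blockIndex n).surjective i
    cases x <;> simp [e, f]
  have h1 := omega_pow A B e f l
  rw [← omega_eq A B hB e f l, pow_pf_top, ← top_eq, smul_smul, hb] at h1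
  have h2 := smul_left_injective ℝ (top_ne_zero (2 * n)) h1
  have hs : (n.factorial * 2 ^ n : ℝ) ≠ 0 := by positivity
  exact mul_left_cancel₀ hs h2

theorem coeff_unique (N : ℕ) (p q : ℕ → ℝ)
    (h : ∀ l : ℝ, ∑ t ∈ Finset.range (N + 1), p t * l ^ t = ∑ t ∈ Finset.range (N + 1), q t * l ^ t) :
    ∀ t ≤ N, p t = q t := by
  intro t ht
  let P : (ℕ → ℝ) → Polynomial ℝ := fun p =>
    ∑ t ∈ Finset.range (N + 1), Polynomial.C (p t) * Polynomial.X ^ t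
  have hP : P p = P q := by
    apply Polynomial.funext
    intro l
    simpa [P, Polynomial.eval_finsetSum] using h l
  have hc : ∀ p : ℕ → ℝ, (P p).coeff t = p t := by
    intro p
    simp only [P, Polynomial.finsetSum_coeff, Polynomial.coeff_C_mul_X_pow]
    rw [Finset.sum_ite_eq, if_pos]
    rw [Finset.mem_range]; omega
  rw [← hc p, ← hc q, hP]

end PfaffAux

theorem pfaffian_block_coeff_formula (n : ℕ) (A B : Matrix (Fin n) (Fin n) ℝ)
    (hA : Aᵀ = -A) (hBsymm : Bᵀ = B)
    (p : ℕ → ℝ)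
    (hp : ∀ l : ℝ,
      (-1 : ℝ) ^ (n / 2) *
          pf ((Matrix.fromBlocks (-(l • A)) B (-B) A).submatrix
            (blockIndex n).symm (blockIndex n).symm)
        = ∑ t ∈ Finset.range (n / 2 + 1), p t * l ^ t) :
    ∀ t ≤ n / 2,
      p t = ∑ S : {S : Finset (Fin n) // S.card = 2 * t},
              ∑ T : {T : Finset (Fin n) // T.card = 2 * t},
        subsetSign t S.1 * subsetSign t T.1 *
          pf (A.submatrix (enum S.1 S.2) (enum S.1 S.2)) *
          pf (A.submatrix (enum T.1 T.2) (enum T.1 T.2)) *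
          (B.submatrix
            (enum (S.1ᶜ) (by simp [Finset.card_compl, S.2] : (S.1ᶜ).card = n - 2 * t))
            (enum (T.1ᶜ) (by simp [Finset.card_compl, T.2] : (T.1ᶜ).card = n - 2 * t))).det := by
  intro t ht
  refine coeff_unique (n / 2) p (qcoef A B) ?_ t ht
  intro l
  rw [← hp l, pf_formula A B hBsymm l, Finset.mul_sum]
  refine Finset.sum_congr rfl fun s hs => ?_
  rw [Finset.mem_range] at hs
  have h1 : n / 2 = s + (n - 2 * s) / 2 := by omega
  have h2 : (-1 : ℝ) ^ (n / 2) = (-1) ^ s * (-1) ^ ((n - 2 * s) / 2) := by rw [← pow_add, ← h1]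
  have h3 : ∀ k : ℕ, (-1 : ℝ) ^ k * (-1) ^ k = 1 := fun k => by rw [← mul_pow]; simp
  rw [h2, neg_pow l s]
  calc _ = ((-1 : ℝ) ^ s * (-1) ^ s) * ((-1) ^ ((n - 2 * s) / 2) * (-1) ^ ((n - 2 * s) / 2)) *
        (qcoef A B s * l ^ s) := by ring
    _ = _ := by rw [h3, h3]; ring
end

section
/- Let A and B be symmetric real n×n matrices with B positive semi-definite, and let h_0, ..., h_{⌊n/2⌋} be the real coefficients defined by the polynomial identity haf [[λA, B], [B, A]] = Σ_{t=0}^{⌊n/2⌋} h_t λ^t (as polynomials in the real variable λ, where [[λA, B], [B, A]] is the 2n×2n block matrix with blocks λA, B, B, A). Then h_t ≥ 0 for all t. -/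
open Matrix BigOperators

/-- The hafnian of an `n × n` real matrix: for `n = 2m` it is
`(1/(m! 2^m)) Σ_π C_{π(1),π(2)} ⋯ C_{π(2m-1),π(2m)}`, and it is `0` for odd `n`. -/
noncomputable def haf {n : ℕ} (C : Matrix (Fin n) (Fin n) ℝ) : ℝ :=
  if Even n then
    (1 / ((n / 2).factorial * 2 ^ (n / 2)) : ℝ) *
      ∑ π : Equiv.Perm (Fin n),
        ∏ i : Fin (n / 2), C (π ⟨2 * i.val, by omega⟩) (π ⟨2 * i.val + 1, by omega⟩)
  else 0

/-- The permanent of an `n × n` real matrix. -/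
noncomputable def per {n : ℕ} (M : Matrix (Fin n) (Fin n) ℝ) : ℝ :=
  ∑ π : Equiv.Perm (Fin n), ∏ i, M i (π i)

open MvPolynomial in
/-- Coefficient of a product in separated variables. -/
lemma coeff_sep {n : ℕ} (P Q : MvPolynomial (Fin n) ℝ) :
    coeff (Finsupp.equivFunOnFinite.symm (fun _ : Fin n ⊕ Fin n => 1))
      (rename Sum.inl P * rename Sum.inr Q)
    = coeff (Finsupp.equivFunOnFinite.symm (fun _ : Fin n => 1)) P *
      coeff (Finsupp.equivFunOnFinite.symm (fun _ : Fin n => 1)) Q := by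
  induction P using MvPolynomial.induction_on' with
  | add p q hp hq => simp only [map_add, add_mul, coeff_add, hp, hq]
  | monomial d a =>
    induction Q using MvPolynomial.induction_on' with
    | add p q hp hq => simp only [map_add, mul_add, coeff_add, hp, hq]
    | monomial e b =>
      rw [rename_monomial, rename_monomial, monomial_mul, coeff_monomial, coeff_monomial,
        coeff_monomial]
      have key : (Finsupp.mapDomain Sum.inl d + Finsupp.mapDomain Sum.inr e
          = Finsupp.equivFunOnFinite.symm (fun _ : Fin n ⊕ Fin n => 1)) ↔
          (d = Finsupp.equivFunOnFinite.symm (fun _ : Fin n => 1) ∧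
           e = Finsupp.equivFunOnFinite.symm (fun _ : Fin n => 1)) := by
        have h1 : ∀ i : Fin n, Finsupp.mapDomain (Sum.inl : Fin n → Fin n ⊕ Fin n) d (Sum.inl i) = d i :=
          fun i => Finsupp.mapDomain_apply Sum.inl_injective d i
        have h2 : ∀ i : Fin n, Finsupp.mapDomain (Sum.inr : Fin n → Fin n ⊕ Fin n) e (Sum.inr i) = e i :=
          fun i => Finsupp.mapDomain_apply Sum.inr_injective e i
        have h3 : ∀ i : Fin n, Finsupp.mapDomain (Sum.inl : Fin n → Fin n ⊕ Fin n) d (Sum.inr i) = 0 :=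
          fun i => Finsupp.mapDomain_of_notMem_range d _ (by simp)
        have h4 : ∀ i : Fin n, Finsupp.mapDomain (Sum.inr : Fin n → Fin n ⊕ Fin n) e (Sum.inl i) = 0 :=
          fun i => Finsupp.mapDomain_of_notMem_range e _ (by simp)
        simp only [Finsupp.ext_iff, Finsupp.add_apply, Sum.forall, h1, h2, h3, h4]
        simp
      simp only [key]
      split_ifs <;> simp_all

lemma sum_pairs {M : Type*} [AddCommMonoid M] (n : ℕ) (h : Fin (2 * n) → M) :
    ∑ i : Fin n, (h ⟨2 * i.val, by omega⟩ + h ⟨2 * i.val + 1, by omega⟩) = ∑ j, h j := by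
  rw [← ((finProdFinEquiv (m := n) (n := 2)).trans (finCongr (by omega))).sum_comp h,
    Fintype.sum_prod_type]
  refine Finset.sum_congr rfl fun i _ => ?_
  rw [Fin.sum_univ_two]
  congr 2 <;> ext <;> simp [finProdFinEquiv] <;> omega

open MvPolynomial in
/-- The quadratic form of a matrix. -/
noncomputable def quadPoly {σ : Type*} [Fintype σ] (C : Matrix σ σ ℝ) : MvPolynomial σ ℝ :=
  ∑ p : σ × σ, MvPolynomial.C (C p.1 p.2) * (X p.1 * X p.2)

open MvPolynomial in
lemma coeff_quadPoly_pow {σ : Type*} [Fintype σ] [DecidableEq σ] (n : ℕ) (e : σ ≃ Fin (2 * n))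
    (C : Matrix σ σ ℝ) :
    coeff (Finsupp.equivFunOnFinite.symm (fun _ : σ => 1)) (quadPoly C ^ n)
    = ∑ π : Equiv.Perm (Fin (2 * n)), ∏ i : Fin n,
        C (e.symm (π ⟨2 * i.val, by omega⟩)) (e.symm (π ⟨2 * i.val + 1, by omega⟩)) := by
  have hmon : ∀ f : Fin n → σ × σ,
      ∏ i, (MvPolynomial.C (C (f i).1 (f i).2) * (X (f i).1 * X (f i).2) : MvPolynomial σ ℝ)
      = monomial (∑ i, (Finsupp.single (f i).1 1 + Finsupp.single (f i).2 1))
          (∏ i, C (f i).1 (f i).2) := by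
    intro f
    rw [monomial_sum_index, map_prod, ← Finset.prod_mul_distrib]
    refine Finset.prod_congr rfl fun i _ => ?_
    rw [X, X, monomial_mul, mul_one]
  rw [quadPoly, Fintype.sum_pow, coeff_sum]
  simp only [hmon, coeff_monomial]
  symm
  refine Finset.sum_of_injOn
    (fun π i => (e.symm (π ⟨2 * i.val, by omega⟩), e.symm (π ⟨2 * i.val + 1, by omega⟩)))
    ?_ (by simp) ?_ ?_
  · intro π _ ρ _ hπ
    ext j
    have := congrFun hπ ⟨j.val / 2, by omega⟩
    simp only [Prod.mk.injEq, EmbeddingLike.apply_eq_iff_eq] at this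
    rcases Nat.even_or_odd' j.val with ⟨c, hc | hc⟩
    · have hj : j = ⟨2 * (j.val / 2), by omega⟩ := by ext; simp; omega
      rw [hj, this.1]
    · have hj : j = ⟨2 * (j.val / 2) + 1, by omega⟩ := by ext; simp; omega
      rw [hj, this.2]
  · intro f _ hf
    rw [if_neg]
    intro hsum
    apply hf
    let g : Fin (2 * n) → Fin (2 * n) := fun j =>
      if j.val % 2 = 0 then e (f ⟨j.val / 2, by omega⟩).1 else e (f ⟨j.val / 2, by omega⟩).2
    have hg0 : ∀ i : Fin n, g ⟨2 * i.val, by omega⟩ = e (f i).1 := by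
      intro i; simp [g]
    have hg1 : ∀ i : Fin n, g ⟨2 * i.val + 1, by omega⟩ = e (f i).2 := by
      intro i
      have : (2 * i.val + 1) / 2 = i.val := by omega
      simp [g, this, Nat.add_mod]
    have hsurj : Function.Surjective g := by
      intro y
      have h1 := DFunLike.congr_fun hsum (e.symm y)
      rw [Finsupp.finsetSum_apply] at h1
      have h2 : ∑ i : Fin n, (Finsupp.single (f i).1 1 + Finsupp.single (f i).2 1 : σ →₀ ℕ) (e.symm y) ≠ 0 := by
        rw [h1]; simp
      obtain ⟨i, _, hi⟩ := Finset.exists_ne_zero_of_sum_ne_zero h2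
      by_cases ha : (f i).1 = e.symm y
      · exact ⟨_, (hg0 i).trans (by simp [ha])⟩
      · by_cases hb : (f i).2 = e.symm y
        · exact ⟨_, (hg1 i).trans (by simp [hb])⟩
        · simp [Finsupp.single_apply, ha, hb] at hi
    refine ⟨Equiv.ofBijective g ⟨Finite.injective_iff_surjective.2 hsurj, hsurj⟩, by simp, ?_⟩
    funext i
    change (e.symm (g _), e.symm (g _)) = f i
    rw [hg0, hg1]
    simp
  · intro π _
    rw [if_pos]
    dsimp only
    rw [sum_pairs n (fun j => (Finsupp.single (e.symm (π j)) 1 : σ →₀ ℕ))]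
    refine ((π.trans e.symm).sum_comp (fun s => (Finsupp.single s 1 : σ →₀ ℕ))).trans ?_
    ext s
    simp [Finsupp.finsetSum_apply, Finsupp.single_apply]

lemma haf_eq (n : ℕ) (C : Matrix (Fin (2 * n)) (Fin (2 * n)) ℝ) :
    haf C = (1 / (n.factorial * 2 ^ n) : ℝ) * ∑ π : Equiv.Perm (Fin (2 * n)), ∏ i : Fin n,
        C (π ⟨2 * i.val, by omega⟩) (π ⟨2 * i.val + 1, by omega⟩) := by
  have h2 : 2 * n / 2 = n := by omega
  rw [haf, if_pos (by simp)]
  congr 1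
  · rw [h2]
  refine Finset.sum_congr rfl fun π _ => ?_
  exact Fintype.prod_equiv (finCongr h2) _ _ (fun i => rfl)

open MvPolynomial in
/-- Linear form of a vector. -/
noncomputable def linPoly {n : ℕ} (v : Fin n → ℝ) : MvPolynomial (Fin n) ℝ :=
  ∑ i, MvPolynomial.C (v i) * X i

open MvPolynomial in
lemma quadPoly_block {n : ℕ} (A G : Matrix (Fin n) (Fin n) ℝ) (l : ℝ) :
    quadPoly (Matrix.fromBlocks (l • A) (Gᵀ * G) (Gᵀ * G) A)
    = MvPolynomial.C l * rename Sum.inl (quadPoly A) + (rename Sum.inr (quadPoly A)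
      + MvPolynomial.C 2 * ∑ k, rename Sum.inl (linPoly (G k)) * rename Sum.inr (linPoly (G k))) := by
  have hB : ∑ k, (rename Sum.inl (linPoly (G k)) * rename Sum.inr (linPoly (G k)) :
      MvPolynomial (Fin n ⊕ Fin n) ℝ)
      = ∑ i, ∑ j, MvPolynomial.C ((Gᵀ * G) i j) * (X (Sum.inl i) * X (Sum.inr j)) := by
    simp only [linPoly, map_sum, map_mul, rename_C, rename_X, Finset.sum_mul_sum,
      Matrix.mul_apply, Matrix.transpose_apply]
    simp only [Finset.sum_mul]
    rw [Finset.sum_comm]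
    refine Finset.sum_congr rfl fun i _ => ?_
    rw [Finset.sum_comm]
    refine Finset.sum_congr rfl fun j _ => Finset.sum_congr rfl fun k _ => ?_
    ring
  have hsym : ∀ i j, (Gᵀ * G) i j = (Gᵀ * G) j i := by
    intro i j
    simp only [Matrix.mul_apply, Matrix.transpose_apply]
    exact Finset.sum_congr rfl fun k _ => mul_comm _ _
  have hB2 : ∑ i, ∑ j, MvPolynomial.C ((Gᵀ * G) i j) * (X (Sum.inr i) * X (Sum.inl j))
     = ∑ i, ∑ j, (MvPolynomial.C ((Gᵀ * G) i j) * (X (Sum.inl i) * X (Sum.inr j)) :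
      MvPolynomial (Fin n ⊕ Fin n) ℝ) := by
    rw [Finset.sum_comm]
    refine Finset.sum_congr rfl fun i _ => Finset.sum_congr rfl fun j _ => ?_
    rw [hsym, mul_comm (X (Sum.inl i))]
  rw [hB]
  simp only [quadPoly, Fintype.sum_prod_type, Fintype.sum_sum_type, Matrix.fromBlocks_apply₁₁,
    Matrix.fromBlocks_apply₁₂, Matrix.fromBlocks_apply₂₁, Matrix.fromBlocks_apply₂₂,
    Finset.sum_add_distrib, hB2, map_sum, map_mul, rename_C, rename_X, Matrix.smul_apply,
    smul_eq_mul, mul_assoc, ← Finset.mul_sum]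
  rw [show (MvPolynomial.C 2 : MvPolynomial (Fin n ⊕ Fin n) ℝ) = 2 from map_ofNat _ 2]
  ring

open MvPolynomial in
lemma coeff_nonneg {n : ℕ} (A G : Matrix (Fin n) (Fin n) ℝ) (t : ℕ) (ht : t ≤ n) :
    0 ≤ coeff (Finsupp.equivFunOnFinite.symm (fun _ : Fin n ⊕ Fin n => 1))
      (rename Sum.inl (quadPoly A) ^ t * (rename Sum.inr (quadPoly A)
      + MvPolynomial.C 2 * ∑ k, rename Sum.inl (linPoly (G k)) * rename Sum.inr (linPoly (G k)))
        ^ (n - t)) := by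
  rw [add_pow, Finset.mul_sum, coeff_sum]
  refine Finset.sum_nonneg fun s hs => ?_
  have hs' : s ≤ n - t := by simpa [Nat.lt_succ_iff] using hs
  generalize hm : n - t - s = m
  rw [mul_pow, Fintype.sum_pow, ← map_pow MvPolynomial.C, Finset.mul_sum, Finset.mul_sum,
    Finset.sum_mul, Finset.mul_sum, coeff_sum]
  refine Finset.sum_nonneg fun f _ => ?_
  have e1 : rename Sum.inl (quadPoly A) ^ t * (rename Sum.inr (quadPoly A) ^ s *
      (MvPolynomial.C (2 ^ m) * ∏ i : Fin m, (rename Sum.inl (linPoly (G (f i))) *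
        rename Sum.inr (linPoly (G (f i))))) * ((n - t).choose s : MvPolynomial (Fin n ⊕ Fin n) ℝ))
      = MvPolynomial.C (2 ^ m * ((n - t).choose s : ℝ)) *
        (rename Sum.inl (quadPoly A ^ t * ∏ i, linPoly (G (f i))) *
         rename Sum.inr (quadPoly A ^ s * ∏ i, linPoly (G (f i)))) := by
    simp only [Finset.prod_mul_distrib, map_mul, map_pow, map_prod, map_natCast]
    ring
  rw [e1, coeff_C_mul, coeff_sep]
  refine mul_nonneg (by positivity) ?_
  by_cases hst : s = t
  · subst hst; exact mul_self_nonneg _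
  · have hq : (quadPoly A).IsHomogeneous 2 := by
      refine IsHomogeneous.sum _ _ _ fun p _ => ?_
      simpa using (isHomogeneous_C (Fin n) (A p.1 p.2)).mul
        ((isHomogeneous_X ℝ p.1).mul (isHomogeneous_X ℝ p.2))
    have hl : ∀ v : Fin n → ℝ, (linPoly v).IsHomogeneous 1 := fun v => by
      refine IsHomogeneous.sum _ _ _ fun p _ => ?_
      simpa using (isHomogeneous_C (Fin n) (v p)).mul (isHomogeneous_X ℝ p)
    have hp : (quadPoly A ^ t * ∏ i, linPoly (G (f i))).IsHomogeneous (2 * t + ∑ i : Fin m, 1) :=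
      (hq.pow t).mul (IsHomogeneous.prod _ _ _ fun i _ => hl _)
    rw [hp.coeff_eq_zero, zero_mul]
    simp [Finsupp.degree_eq_sum]
    omega

theorem hafnian_block_coeffs_nonneg (n : ℕ) (A B : Matrix (Fin n) (Fin n) ℝ)
    (hA : Aᵀ = A) (hBsymm : Bᵀ = B)
    (hBpsd : ∀ x : Fin n → ℝ, 0 ≤ x ⬝ᵥ B *ᵥ x)
    (h : ℕ → ℝ)
    (hh : ∀ l : ℝ,
      haf ((Matrix.fromBlocks (l • A) B B A).submatrix
          (blockIndex n).symm (blockIndex n).symm)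
        = ∑ t ∈ Finset.range (n / 2 + 1), h t * l ^ t) :
    ∀ t ≤ n / 2, 0 ≤ h t := by
  have hpsd : B.PosSemidef := by
    refine Matrix.PosSemidef.of_dotProduct_mulVec_nonneg ?_ ?_
    · simpa [Matrix.IsHermitian] using hBsymm
    · simpa using hBpsd
  open scoped MatrixOrder Matrix.Norms.L2Operator in
  obtain ⟨G, hG⟩ : ∃ G : Matrix (Fin n) (Fin n) ℝ, B = Gᵀ * G := by
    obtain ⟨G, hG⟩ := CStarAlgebra.nonneg_iff_eq_star_mul_self.mp hpsd.nonneg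
    exact ⟨G, by simpa [Matrix.star_eq_conjTranspose] using hG⟩
  subst hG
  let r : MvPolynomial (Fin n ⊕ Fin n) ℝ := MvPolynomial.rename Sum.inr (quadPoly A)
      + MvPolynomial.C 2 * ∑ k, MvPolynomial.rename Sum.inl (linPoly (G k)) *
        MvPolynomial.rename Sum.inr (linPoly (G k))
  let H : ℕ → ℝ := fun t => (1 / (n.factorial * 2 ^ n) : ℝ) * (n.choose t *
    MvPolynomial.coeff (Finsupp.equivFunOnFinite.symm (fun _ : Fin n ⊕ Fin n => 1))
      (MvPolynomial.rename Sum.inl (quadPoly A) ^ t * r ^ (n - t)))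
  have hH : ∀ t ≤ n, 0 ≤ H t := fun t ht =>
    mul_nonneg (by positivity) (mul_nonneg (by positivity) (coeff_nonneg A G t ht))
  have hl : ∀ l : ℝ, ∑ t ∈ Finset.range (n / 2 + 1), h t * l ^ t
      = ∑ t ∈ Finset.range (n + 1), H t * l ^ t := by
    intro l
    rw [← hh l, haf_eq]
    simp only [Matrix.submatrix_apply]
    rw [← coeff_quadPoly_pow n (blockIndex n), quadPoly_block, add_pow, MvPolynomial.coeff_sum,
      Finset.mul_sum]
    refine Finset.sum_congr rfl fun t _ => ?_
    have e1 : (MvPolynomial.C l * MvPolynomial.rename Sum.inl (quadPoly A)) ^ t * r ^ (n - t) *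
        (n.choose t : MvPolynomial (Fin n ⊕ Fin n) ℝ)
        = MvPolynomial.C (l ^ t * (n.choose t : ℝ)) *
          (MvPolynomial.rename Sum.inl (quadPoly A) ^ t * r ^ (n - t)) := by
      simp only [map_mul, map_pow, map_natCast]
      ring
    change _ * MvPolynomial.coeff _ ((MvPolynomial.C l * MvPolynomial.rename Sum.inl (quadPoly A)) ^ t
      * r ^ (n - t) * (n.choose t : MvPolynomial (Fin n ⊕ Fin n) ℝ)) = _
    rw [e1, MvPolynomial.coeff_C_mul]
    simp only [H]
    ring
  have hpoly : (∑ t ∈ Finset.range (n / 2 + 1), Polynomial.monomial t (h t))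
      = ∑ t ∈ Finset.range (n + 1), Polynomial.monomial t (H t) := by
    apply Polynomial.funext
    intro l
    simpa [Polynomial.eval_finsetSum] using hl l
  intro t ht
  have hc := congrArg (fun p => Polynomial.coeff p t) hpoly
  simp only [Polynomial.finsetSum_coeff, Polynomial.coeff_monomial, Finset.sum_ite_eq',
    Finset.mem_range] at hc
  rw [if_pos (by omega), if_pos (by omega)] at hc
  rw [hc]
  exact hH t (by omega)
end

section
/- Let A and B be symmetric real n×n matrices with B positive definite, and let h_0, ..., h_{⌊n/2⌋} be the real coefficients defined by the polynomial identity haf [[λA, B], [B, A]] = Σ_{t=0}^{⌊n/2⌋} h_t λ^t (as polynomials in the real variable λ). Then for each t, h_t = 0 if and only if haf A_{S,S} = 0 for every subset S of {1, ..., n} with |S| = 2t, where A_{S,S} denotes the submatrix of A with rows and columns indexed by S. -/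
open Matrix BigOperators

namespace HafAux

open MvPolynomial

/-- The exponent vector with all entries one. -/
noncomputable def ones (σ : Type*) [Fintype σ] : σ →₀ ℕ := Finsupp.equivFunOnFinite.symm 1

/-- The linear functional extracting the coefficient of the squarefree full monomial. -/
noncomputable def ec (σ : Type*) [Fintype σ] : MvPolynomial σ ℝ →ₗ[ℝ] ℝ := lcoeff ℝ (ones σ)

/-- The quadratic form attached to a matrix. -/
noncomputable def quad {σ : Type*} [Fintype σ] (C : Matrix σ σ ℝ) : MvPolynomial σ ℝ :=
  ∑ p : Fin 2 → σ, MvPolynomial.C (C (p 0) (p 1)) * ∏ j, X (p j)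

lemma ec_prod_X {σ κ : Type*} [Fintype σ] [Fintype κ] (g : κ → σ) [Decidable (Function.Bijective g)] :
    ec σ (∏ k, X (g k)) = if Function.Bijective g then 1 else 0 := by
  classical
  have h1 : (∏ k, (X (g k) : MvPolynomial σ ℝ)) = monomial (∑ k, Finsupp.single (g k) 1) 1 := by
    rw [monomial_sum_one]; rfl
  rw [h1]
  simp only [ec, lcoeff_apply, coeff_monomial]
  congr 1
  rw [eq_iff_iff, Function.bijective_iff_existsUnique]
  rw [DFunLike.ext_iff]
  refine forall_congr' fun b => ?_
  simp only [ones, Finsupp.coe_finsetSum, Finset.sum_apply, Finsupp.single_apply,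
    Finsupp.equivFunOnFinite_symm_apply_apply, Pi.one_apply]
  rw [Finset.sum_boole, Nat.cast_id, Finset.card_eq_one, Finset.singleton_iff_unique_mem]
  simp

lemma quad_pow {σ : Type*} [Fintype σ] (C : Matrix σ σ ℝ) (m : ℕ) :
    quad C ^ m = ∑ g : Fin m × Fin 2 → σ,
      MvPolynomial.C (∏ i, C (g (i, 0)) (g (i, 1))) * ∏ k, X (g k) := by
  classical
  have : quad C ^ m = ∏ _i : Fin m, quad C := by simp
  rw [this]
  simp only [quad]
  rw [Fintype.prod_sum]
  rw [← (Equiv.curry (Fin m) (Fin 2) σ).sum_comp]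
  refine Finset.sum_congr rfl fun g _ => ?_
  rw [Finset.prod_mul_distrib, map_prod, Fintype.prod_prod_type]
  rfl

lemma sum_elim_inj {α β γ : Type*} {f : α → γ} {g : β → γ}
    (h : Function.Injective (Sum.elim f g)) :
    Function.Injective f ∧ Function.Injective g ∧ ∀ a b, f a ≠ g b := by
  refine ⟨fun a b hab => Sum.inl_injective (h hab), fun a b hab => Sum.inr_injective (h hab),
    fun a b hab => ?_⟩
  have := @h (Sum.inl a) (Sum.inr b) hab
  simp at this

/-- Key expansion. -/
lemma ec_quad_pow_mul {σ τ κ : Type*} [Fintype σ] [Fintype τ] [Fintype κ] [DecidableEq τ]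
    (C : Matrix σ σ ℝ) (m : ℕ) (e₀ : τ → σ) (f : κ → σ)
    (hb : Function.Bijective (Sum.elim e₀ f)) :
    ec σ (quad C ^ m * ∏ k, X (f k)) =
      ∑ e : Fin m × Fin 2 ≃ τ, ∏ i, C (e₀ (e (i, 0))) (e₀ (e (i, 1))) := by
  classical
  have key : ∀ g : Fin m × Fin 2 → σ,
      ec σ (MvPolynomial.C (∏ i, C (g (i, 0)) (g (i, 1))) * (∏ k, X (g k)) * ∏ k, X (f k)) =
      if Function.Bijective (Sum.elim g f) then ∏ i, C (g (i, 0)) (g (i, 1)) else 0 := by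
    intro g
    rw [mul_assoc, MvPolynomial.C_mul', map_smul]
    have := ec_prod_X (Sum.elim g f)
    rw [Fintype.prod_sum_type] at this
    simp only [Sum.elim_inl, Sum.elim_inr] at this
    rw [this]
    simp
  rw [quad_pow, Finset.sum_mul, map_sum]
  simp only [key]
  have he₀ : Function.Injective e₀ := (sum_elim_inj hb.1).1
  have hf : Function.Injective f := (sum_elim_inj hb.1).2.1
  have hd := (sum_elim_inj hb.1).2.2
  symm
  refine Fintype.sum_of_injective (fun e : Fin m × Fin 2 ≃ τ => fun x => e₀ (e x)) ?_ _ _ ?_ ?_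
  · intro e e' h
    ext x
    exact he₀ (congrFun h x)
  · intro g hg
    rw [if_neg]
    intro hgb
    apply hg
    have hgi := (sum_elim_inj hgb.1)
    have : ∀ x, ∃ y, e₀ y = g x := by
      intro x
      obtain ⟨y | k, h⟩ := hb.2 (g x)
      · exact ⟨y, h⟩
      · exact absurd h.symm (hgi.2.2 x k)
    choose u hu using this
    refine ⟨Equiv.ofBijective u ⟨fun a b hab => hgi.1 (by rw [← hu, ← hu, hab]), fun y => ?_⟩, ?_⟩
    · obtain ⟨x | k, h⟩ := hgb.2 (e₀ y)
      · exact ⟨x, he₀ (by rw [hu]; exact h)⟩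
      · exact absurd h.symm (hd y k)
    · funext x; exact hu x
  · intro e
    rw [if_pos]
    have : Sum.elim (fun x => e₀ (e x)) f = Sum.elim e₀ f ∘ (Equiv.sumCongr e (Equiv.refl κ)) := by
      ext (x | x) <;> rfl
    rw [this]
    exact hb.comp (Equiv.bijective _)

lemma haf_eq {σ : Type*} (m : ℕ) (C : Matrix σ σ ℝ) (e₀ : Fin (2 * m) → σ) :
    haf (C.submatrix e₀ e₀) = (1 / (m.factorial * 2 ^ m) : ℝ) *
      ∑ e : Fin m × Fin 2 ≃ Fin (2 * m), ∏ i, C (e₀ (e (i, 0))) (e₀ (e (i, 1))) := by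
  have hm : 2 * m / 2 = m := by omega
  unfold haf
  rw [if_pos (even_two_mul m)]
  congr 1
  · rw [hm]
  let E : Fin m × Fin 2 ≃ Fin (2 * m) := finProdFinEquiv.trans (finCongr (mul_comm m 2))
  rw [← ((Equiv.equivCongr E.symm (Equiv.refl (Fin (2 * m))))).sum_comp]
  refine Finset.sum_congr rfl fun π _ => ?_
  rw [← (finCongr hm).prod_comp]
  refine Finset.prod_congr rfl fun i _ => ?_
  simp only [Matrix.submatrix_apply, Equiv.equivCongr_apply_apply]
  have h0 : E (finCongr hm i, 0) = ⟨2 * i.val, by omega⟩ := by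
    simp [E, finProdFinEquiv]
  have h1 : E (finCongr hm i, 1) = ⟨2 * i.val + 1, by omega⟩ := by
    simp [E, finProdFinEquiv, add_comm]
  rw [← h0, ← h1]
  rfl

lemma ec_split {σ τ : Type*} [Fintype σ] [Fintype τ] (p : MvPolynomial σ ℝ) (q : MvPolynomial τ ℝ) :
    ec (σ ⊕ τ) (rename Sum.inl p * rename Sum.inr q) = ec σ p * ec τ q := by
  classical
  induction p using MvPolynomial.induction_on' with
  | add p p' h h' => simp only [map_add, add_mul, h, h']
  | monomial a c =>
    induction q using MvPolynomial.induction_on' with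
    | add p p' h h' => simp only [map_add, mul_add, h, h']
    | monomial b d =>
      simp only [rename_monomial, monomial_mul, ec, lcoeff_apply, coeff_monomial]
      have : (Finsupp.mapDomain Sum.inl a + Finsupp.mapDomain Sum.inr b = ones (σ ⊕ τ)) ↔
          (a = ones σ ∧ b = ones τ) := by
        simp only [DFunLike.ext_iff, Finsupp.add_apply, Sum.forall]
        simp [Finsupp.mapDomain_apply Sum.inl_injective, Finsupp.mapDomain_apply Sum.inr_injective,
          Finsupp.mapDomain_of_notMem_range, ones]
      simp only [this]
      split_ifs <;> simp_all

lemma quad_homog {σ : Type*} [Fintype σ] (C : Matrix σ σ ℝ) : (quad C).IsHomogeneous 2 := by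
  unfold quad
  refine IsHomogeneous.sum _ _ _ fun p _ => IsHomogeneous.C_mul ?_ _
  simpa using IsHomogeneous.prod Finset.univ (fun j => (X (p j) : MvPolynomial σ ℝ)) (fun _ => 1)
    fun j _ => isHomogeneous_X _ _

lemma ec_homog {σ : Type*} [Fintype σ] {p : MvPolynomial σ ℝ} {d : ℕ} (hp : p.IsHomogeneous d)
    (hd : Fintype.card σ ≠ d) : ec σ p = 0 := by
  refine hp.coeff_eq_zero ?_
  rw [Finsupp.degree_eq_sum]
  simpa [ones] using hd

/-- Change of linear basis. -/
lemma change {σ κ ι : Type*} [Fintype ι] [Fintype κ] [DecidableEq κ]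
    (L : MvPolynomial σ ℝ →ₗ[ℝ] ℝ) (p : MvPolynomial σ ℝ)
    (u v : ι → MvPolynomial σ ℝ) (N : Matrix ι ι ℝ) (hv : ∀ i, v i = ∑ k, N i k • u k)
    (hu : ∀ f : κ → ι, L (p * ∏ j, u (f j)) = 0) (f : κ → ι) : L (p * ∏ j, v (f j)) = 0 := by
  simp only [hv]
  rw [Fintype.prod_sum, Finset.mul_sum, map_sum]
  refine Finset.sum_eq_zero fun g _ => ?_
  rw [Finset.prod_smul, mul_smul_comm, map_smul, hu, smul_zero]

open scoped MatrixOrder in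
lemma exists_factor {n : ℕ} (B : Matrix (Fin n) (Fin n) ℝ) (hBsymm : Bᵀ = B)
    (hBpd : ∀ x : Fin n → ℝ, x ≠ 0 → 0 < x ⬝ᵥ B *ᵥ x) :
    ∃ M N : Matrix (Fin n) (Fin n) ℝ, B = Mᵀ * M ∧ N * M = 1 := by
  have hB : B.PosDef := by
    rw [posDef_iff_dotProduct_mulVec]
    exact ⟨by simpa [Matrix.IsHermitian] using hBsymm, by simpa using hBpd⟩
  obtain ⟨M, hM⟩ := CStarAlgebra.nonneg_iff_eq_star_mul_self.mp hB.posSemidef.nonneg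
  have hM' : B = Mᵀ * M := by rw [hM, star_eq_conjTranspose, conjTranspose_eq_transpose_of_trivial]
  refine ⟨M, B⁻¹ * Mᵀ, hM', ?_⟩
  rw [Matrix.mul_assoc, ← hM']
  exact Matrix.nonsing_inv_mul _ ((Matrix.isUnit_iff_isUnit_det _).mp hB.isUnit)

/-- The mixed bilinear form. -/
noncomputable def bil {n : ℕ} (B : Matrix (Fin n) (Fin n) ℝ) : MvPolynomial (Fin n ⊕ Fin n) ℝ :=
  ∑ i, ∑ j, MvPolynomial.C (B i j) * (X (Sum.inl i) * X (Sum.inr j))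

/-- The linear forms given by the rows of a matrix. -/
noncomputable def lin {n : ℕ} (M : Matrix (Fin n) (Fin n) ℝ) (k : Fin n) :
    MvPolynomial (Fin n) ℝ := ∑ i, M k i • X i

lemma quad_eq {σ : Type*} [Fintype σ] (C : Matrix σ σ ℝ) :
    quad C = ∑ i, ∑ j, MvPolynomial.C (C i j) * (X i * X j) := by
  unfold quad
  rw [← (finTwoArrowEquiv σ).symm.sum_comp, Fintype.sum_prod_type]
  simp [finTwoArrowEquiv]

lemma quad_block {n : ℕ} (A B : Matrix (Fin n) (Fin n) ℝ) (hB : Bᵀ = B) (l : ℝ) :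
    quad (Matrix.fromBlocks (l • A) B B A) =
      MvPolynomial.C l * rename Sum.inl (quad A) + (2 * bil B + rename Sum.inr (quad A)) := by
  have hB' : ∀ i j, B i j = B j i := fun i j => by
    conv_lhs => rw [← hB]
    rfl
  have h2 : ∑ i, ∑ j, MvPolynomial.C (B i j) * (X (Sum.inr i) * X (Sum.inl j)) = bil B := by
    unfold bil
    rw [Finset.sum_comm]
    refine Finset.sum_congr rfl fun i _ => Finset.sum_congr rfl fun j _ => ?_
    rw [hB', mul_comm (X _)]
  simp only [quad_eq, Fintype.sum_sum_type, Matrix.fromBlocks_apply₁₁, Matrix.fromBlocks_apply₁₂,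
    Matrix.fromBlocks_apply₂₁, Matrix.fromBlocks_apply₂₂, Finset.sum_add_distrib, h2]
  simp only [map_sum, map_mul, rename_C, rename_X, Finset.mul_sum, Matrix.smul_apply, smul_eq_mul,
    mul_assoc]
  unfold bil
  ring

lemma bil_eq {n : ℕ} (M : Matrix (Fin n) (Fin n) ℝ) :
    bil (Mᵀ * M) = ∑ k, rename Sum.inl (lin M k) * rename Sum.inr (lin M k) := by
  unfold bil lin
  simp only [Matrix.mul_apply, Matrix.transpose_apply, map_sum, Finset.sum_mul, Finset.mul_sum,
    rename_X, rename_C, MvPolynomial.smul_eq_C_mul, map_mul]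
  rw [Finset.sum_comm]
  conv_rhs => rw [Finset.sum_comm]
  refine Finset.sum_congr rfl fun i _ => ?_
  rw [Finset.sum_comm]
  refine Finset.sum_congr rfl fun j _ => Finset.sum_congr rfl fun k _ => ?_
  ring

lemma bil_pow {n : ℕ} (M : Matrix (Fin n) (Fin n) ℝ) (b : ℕ) :
    bil (Mᵀ * M) ^ b = ∑ f : Fin b → Fin n,
      rename Sum.inl (∏ j, lin M (f j)) * rename Sum.inr (∏ j, lin M (f j)) := by
  have : bil (Mᵀ * M) ^ b = ∏ _i : Fin b, bil (Mᵀ * M) := by simp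
  rw [this]
  simp only [bil_eq]
  rw [Fintype.prod_sum]
  simp only [Finset.prod_mul_distrib, map_prod]

lemma ec_term {n : ℕ} (A M : Matrix (Fin n) (Fin n) ℝ) (a b c : ℕ) :
    ec _ (rename Sum.inl (quad A) ^ a * (bil (Mᵀ * M) ^ b * rename Sum.inr (quad A) ^ c)) =
      ∑ f : Fin b → Fin n, ec _ (quad A ^ a * ∏ j, lin M (f j)) *
        ec _ (quad A ^ c * ∏ j, lin M (f j)) := by
  rw [bil_pow, Finset.sum_mul, Finset.mul_sum, map_sum]
  refine Finset.sum_congr rfl fun f _ => ?_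
  rw [← ec_split]
  congr 1
  rw [map_mul, map_mul, map_pow, map_pow]
  ring

lemma lin_homog {n : ℕ} (M : Matrix (Fin n) (Fin n) ℝ) (k : Fin n) : (lin M k).IsHomogeneous 1 := by
  refine IsHomogeneous.sum _ _ _ fun i _ => ?_
  rw [MvPolynomial.smul_eq_C_mul]
  exact isHomogeneous_C_mul_X _ _

lemma ec_zero {n : ℕ} (A M : Matrix (Fin n) (Fin n) ℝ) (a b : ℕ) (f : Fin b → Fin n)
    (h : n ≠ 2 * a + b) : ec _ (quad A ^ a * ∏ j, lin M (f j)) = 0 := by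
  refine ec_homog (d := 2 * a + b) (((quad_homog A).pow a).mul ?_) (by simpa using h)
  simpa using IsHomogeneous.prod Finset.univ (fun j => lin M (f j)) (fun _ => 1)
    fun j _ => lin_homog _ _

/-- The coefficient of `l ^ a`. -/
noncomputable def wt {n : ℕ} (A B : Matrix (Fin n) (Fin n) ℝ) (a : ℕ) : ℝ :=
  n.choose a * ec _ (rename Sum.inl (quad A) ^ a * (2 * bil B + rename Sum.inr (quad A)) ^ (n - a))

lemma ec_block {n : ℕ} (A B : Matrix (Fin n) (Fin n) ℝ) (hB : Bᵀ = B) (l : ℝ) :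
    ec _ (quad (Matrix.fromBlocks (l • A) B B A) ^ n) =
      ∑ a ∈ Finset.range (n + 1), wt A B a * l ^ a := by
  rw [quad_block A B hB, add_pow, map_sum]
  refine Finset.sum_congr rfl fun a _ => ?_
  rw [wt, mul_pow, ← map_pow, mul_assoc, mul_assoc, MvPolynomial.C_mul', map_smul, smul_eq_mul,
    ← mul_assoc, mul_comm _ ((n.choose a : ℕ) : MvPolynomial (Fin n ⊕ Fin n) ℝ), ← nsmul_eq_mul,
    map_nsmul, nsmul_eq_mul]
  ring

lemma wt_eq {n : ℕ} (A M : Matrix (Fin n) (Fin n) ℝ) (t : ℕ) (ht : t ≤ n / 2) :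
    ∃ c : ℝ, 0 < c ∧ wt A (Mᵀ * M) t =
      c * ∑ f : Fin (n - 2 * t) → Fin n, ec _ (quad A ^ t * ∏ j, lin M (f j)) ^ 2 := by
  refine ⟨n.choose t * ((n - t).choose (n - 2 * t) * 2 ^ (n - 2 * t)), ?_, ?_⟩
  · have h1 : 0 < n.choose t := Nat.choose_pos (by omega)
    have h2 : 0 < (n - t).choose (n - 2 * t) := Nat.choose_pos (by omega)
    positivity
  · rw [wt, mul_assoc]
    congr 1
    rw [add_pow, Finset.mul_sum, map_sum]
    have key : ∀ b, ec _ (rename Sum.inl (quad A) ^ t * ((2 * bil (Mᵀ * M)) ^ b *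
        rename Sum.inr (quad A) ^ (n - t - b) *
        (((n - t).choose b : ℕ) : MvPolynomial (Fin n ⊕ Fin n) ℝ))) =
        ((n - t).choose b * 2 ^ b) * ∑ f : Fin b → Fin n, ec _ (quad A ^ t * ∏ j, lin M (f j)) *
        ec _ (quad A ^ (n - t - b) * ∏ j, lin M (f j)) := by
      intro b
      rw [← ec_term, ← smul_eq_mul (a := ((n - t).choose b * 2 ^ b : ℝ)), ← map_smul, MvPolynomial.smul_eq_C_mul]
      congr 1
      simp only [map_mul, map_pow, map_natCast, map_ofNat]
      ring
    simp only [key]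
    rw [Finset.sum_eq_single (n - 2 * t)]
    · congr 1
      refine Finset.sum_congr rfl fun f _ => ?_
      rw [show n - t - (n - 2 * t) = t by omega, sq]
    · intro b _ hb
      rw [Finset.sum_eq_zero, mul_zero]
      intro f _
      rw [ec_zero A M t b f (by omega), zero_mul]
    · intro hb
      exact absurd (Finset.mem_range.mpr (by omega)) hb

lemma coeff_match (N K : ℕ) (hNK : N ≤ K) (h w : ℕ → ℝ)
    (hh : ∀ l : ℝ, ∑ a ∈ Finset.range (K + 1), w a * l ^ a =
      ∑ t ∈ Finset.range (N + 1), h t * l ^ t) (t : ℕ) (ht : t ≤ N) : h t = w t := by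
  have : (∑ a ∈ Finset.range (K + 1), Polynomial.C (w a) * Polynomial.X ^ a : Polynomial ℝ) =
      ∑ t ∈ Finset.range (N + 1), Polynomial.C (h t) * Polynomial.X ^ t := by
    refine Polynomial.funext fun l => ?_
    simpa [Polynomial.eval_finsetSum] using hh l
  have := congrArg (fun p => Polynomial.coeff p t) this
  simp only [Polynomial.finsetSum_coeff, Polynomial.coeff_C_mul_X_pow] at this
  rw [Finset.sum_ite_eq, Finset.sum_ite_eq, if_pos (Finset.mem_range.mpr (by omega)),
    if_pos (Finset.mem_range.mpr (by omega))] at this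
  exact this.symm

lemma haf_block {n : ℕ} (C : Matrix (Fin n ⊕ Fin n) (Fin n ⊕ Fin n) ℝ) :
    haf (C.submatrix (blockIndex n).symm (blockIndex n).symm) =
      (1 / (n.factorial * 2 ^ n) : ℝ) * ec _ (quad C ^ n) := by
  rw [haf_eq n C (blockIndex n).symm]
  congr 1
  have := ec_quad_pow_mul C n (blockIndex n).symm (Fin.elim0 : Fin 0 → Fin n ⊕ Fin n) (by
    constructor
    · rintro (a | a) (b | b) h
      · exact congrArg _ ((blockIndex n).symm.injective h)
      · exact b.elim0
      · exact a.elim0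
      · exact a.elim0
    · intro y
      exact ⟨Sum.inl (blockIndex n y), by simp⟩)
  rw [← this]
  simp

lemma haf_sub {n t : ℕ} (A : Matrix (Fin n) (Fin n) ℝ) (S : Finset (Fin n)) (hS : S.card = 2 * t)
    {k : ℕ} (f : Fin k → Fin n) (hf : Function.Injective f) (hfS : ∀ i, i ∈ S ↔ ∀ j, f j ≠ i) :
    haf (A.submatrix (enum S hS) (enum S hS)) =
      (1 / (t.factorial * 2 ^ t) : ℝ) * ec _ (quad A ^ t * ∏ j, X (f j)) := by
  rw [haf_eq]
  congr 1
  rw [ec_quad_pow_mul A t (enum S hS) f]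
  have hm : ∀ a, enum S hS a ∈ S := fun a => (S.orderIsoOfFin hS a).2
  constructor
  · refine Function.Injective.sumElim ?_ hf ?_
    · intro a b hab
      exact (S.orderIsoOfFin hS).injective (Subtype.ext hab)
    · intro a b hab
      exact (hfS _).mp (hm a) b hab.symm
  · intro y
    by_cases hy : y ∈ S
    · obtain ⟨a, ha⟩ := (S.orderIsoOfFin hS).surjective ⟨y, hy⟩
      exact ⟨Sum.inl a, congrArg Subtype.val ha⟩
    · rw [hfS] at hy
      push Not at hy
      obtain ⟨j, hj⟩ := hy
      exact ⟨Sum.inr j, hj⟩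

lemma haf_iff {n t : ℕ} (A : Matrix (Fin n) (Fin n) ℝ) (ht : t ≤ n / 2) :
    (∀ f : Fin (n - 2 * t) → Fin n, ec _ (quad A ^ t * ∏ j, X (f j)) = 0) ↔
    ∀ S : Finset (Fin n), ∀ hS : S.card = 2 * t,
        haf (A.submatrix (enum S hS) (enum S hS)) = 0 := by
  constructor
  · intro H S hS
    have hc : (Sᶜ).card = n - 2 * t := by rw [Finset.card_compl, hS, Fintype.card_fin]
    rw [haf_sub A S hS (Sᶜ.orderEmbOfFin hc) (Sᶜ.orderEmbOfFin hc).injective, H, mul_zero]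
    intro i
    have := Finset.range_orderEmbOfFin Sᶜ hc
    have h2 : i ∈ Set.range (Sᶜ.orderEmbOfFin hc) ↔ i ∉ S := by rw [this]; simp
    rw [Set.mem_range] at h2
    rw [← not_exists, h2, not_not]
  · intro H f
    by_cases hf : Function.Injective f
    · let S : Finset (Fin n) := (Finset.univ.image f)ᶜ
      have hS : S.card = 2 * t := by
        rw [Finset.card_compl, Finset.card_image_of_injective _ hf]
        simp
        omega
      have h1 := haf_sub A S hS f hf (by simp [S])
      rw [H S hS] at h1
      have h2 : (1 / (t.factorial * 2 ^ t) : ℝ) ≠ 0 := by positivity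
      exact (mul_eq_zero.mp h1.symm).resolve_left h2
    · classical
      rw [quad_pow, Finset.sum_mul, map_sum]
      refine Finset.sum_eq_zero fun g _ => ?_
      rw [mul_assoc, MvPolynomial.C_mul', map_smul]
      have := ec_prod_X (Sum.elim g f)
      rw [Fintype.prod_sum_type] at this
      simp only [Sum.elim_inl, Sum.elim_inr] at this
      rw [this, if_neg fun hb => hf (sum_elim_inj hb.1).2.1, smul_zero]

end HafAux

theorem hafnian_block_coeff_eq_zero_iff (n : ℕ) (A B : Matrix (Fin n) (Fin n) ℝ)
    (hA : Aᵀ = A) (hBsymm : Bᵀ = B)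
    (hBpd : ∀ x : Fin n → ℝ, x ≠ 0 → 0 < x ⬝ᵥ B *ᵥ x)
    (h : ℕ → ℝ)
    (hh : ∀ l : ℝ,
      haf ((Matrix.fromBlocks (l • A) B B A).submatrix
          (blockIndex n).symm (blockIndex n).symm)
        = ∑ t ∈ Finset.range (n / 2 + 1), h t * l ^ t) :
    ∀ t ≤ n / 2,
      (h t = 0 ↔ ∀ S : Finset (Fin n), ∀ hS : S.card = 2 * t,
        haf (A.submatrix (enum S hS) (enum S hS)) = 0) := by
  intro t ht
  obtain ⟨M, N, hM, hN⟩ := HafAux.exists_factor B hBsymm hBpd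
  have hpos : (0 : ℝ) < 1 / (n.factorial * 2 ^ n) := by positivity
  have h1 : h t = (1 / (n.factorial * 2 ^ n) : ℝ) * HafAux.wt A B t := by
    refine HafAux.coeff_match (n / 2) n (Nat.div_le_self _ _) h
      (fun a => (1 / (n.factorial * 2 ^ n) : ℝ) * HafAux.wt A B a) (fun l => ?_) t ht
    rw [← hh l, HafAux.haf_block, HafAux.ec_block A B hBsymm, Finset.mul_sum]
    simp only [mul_assoc]
  obtain ⟨c, hc, hw⟩ := HafAux.wt_eq A M t ht
  rw [← hM] at hw
  rw [← HafAux.haf_iff A ht, h1, hw, mul_eq_zero, or_iff_right hpos.ne', mul_eq_zero,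
    or_iff_right hc.ne', Finset.sum_eq_zero_iff_of_nonneg fun f _ => sq_nonneg _]
  simp only [Finset.mem_univ, true_implies, sq_eq_zero_iff]
  constructor
  · intro H
    refine HafAux.change _ _ (HafAux.lin M) MvPolynomial.X N (fun i => ?_) H
    simp only [HafAux.lin, Finset.smul_sum, smul_smul]
    rw [Finset.sum_comm]
    simp only [← Finset.sum_smul, ← Matrix.mul_apply, hN, Matrix.one_apply]
    simp
  · intro H
    exact HafAux.change _ _ MvPolynomial.X (HafAux.lin M) M (fun i => rfl) H
end
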